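/- arXiv:1906.04227 — 16 statements merged into one kernel-verified Lean document; each statement's English description precedes it below -/
import Mathlib

section
/- Fix an integer n ≥ 2. The subset Q⁻ = {x ∈ H : |x| < 1} of H = ℤ[1/n] is symmetric and strictly confining for H under the action of α⁻¹, where α⁻¹(x) = x/n. That is: α⁻¹(Q⁻) is a proper subset of Q⁻; for every x ∈ H there exists k ≥ 0 with x/n^k ∈ Q⁻ (equivalently H = ⋃_{k≥0} α^k(Q⁻)); and α⁻¹(Q⁻ + Q⁻) ⊆ Q⁻. -/
/-- `x ∈ H = ℤ[1/n]`: `x` is a rational of the form `a / n^k`. -/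
def inH (n : ℕ) (x : ℚ) : Prop := ∃ (a : ℤ) (k : ℕ), x = (a : ℚ) / (n : ℚ) ^ k

/-- A subset of `ℚ` is symmetric if it is closed under negation. -/
def IsSymmSet (Q : Set ℚ) : Prop := ∀ x ∈ Q, -x ∈ Q

/-- `Q ⊆ H` is confining for `H = ℤ[1/n]` under the action of `α⁻¹ : x ↦ x/n`:
(a) `α⁻¹(Q) ⊆ Q`; (b) every `x ∈ H` satisfies `α^{-k}(x) ∈ Q` for some `k ≥ 0`;
(c) there is `k₀ ≥ 0` with `α^{-k₀}(Q + Q) ⊆ Q`. -/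
def ConfiningInv (n : ℕ) (Q : Set ℚ) : Prop :=
  (∀ x ∈ Q, inH n x) ∧
  (∀ x ∈ Q, x / (n : ℚ) ∈ Q) ∧
  (∀ x : ℚ, inH n x → ∃ k : ℕ, x / (n : ℚ) ^ k ∈ Q) ∧
  (∃ k₀ : ℕ, ∀ x ∈ Q, ∀ y ∈ Q, (x + y) / (n : ℚ) ^ k₀ ∈ Q)

/-- `Q⁻ = {x ∈ H : |x| < 1}`. -/
def Qminus (n : ℕ) : Set ℚ := {x | inH n x ∧ |x| < 1}

/-- `Q⁻ = {x ∈ H : |x| < 1}` is symmetric and strictly confining for `H = ℤ[1/n]`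
under the action of `α⁻¹ : x ↦ x/n`; moreover condition (c) holds with `k₀ = 1`,
i.e. `α⁻¹(Q⁻ + Q⁻) ⊆ Q⁻`. -/
theorem Qminus_strictly_confining (n : ℕ) (hn : 2 ≤ n) :
    IsSymmSet (Qminus n) ∧ ConfiningInv n (Qminus n) ∧
      (fun x : ℚ => x / (n : ℚ)) '' Qminus n ⊂ Qminus n ∧
      (∀ x ∈ Qminus n, ∀ y ∈ Qminus n, (x + y) / (n : ℚ) ∈ Qminus n) := by
  have hn2 : (2 : ℚ) ≤ (n : ℚ) := by exact_mod_cast hn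
  have hn0 : (0 : ℚ) < (n : ℚ) := by linarith
  have hne : (n : ℚ) ≠ 0 := hn0.ne'
  have hdiv : ∀ (x : ℚ) (j : ℕ), inH n x → inH n (x / (n : ℚ) ^ j) := by
    rintro x j ⟨a, k, rfl⟩
    exact ⟨a, k + j, by rw [div_div, pow_add]⟩
  have hadd : ∀ x y : ℚ, inH n x → inH n y → inH n (x + y) := by
    rintro x y ⟨a, k, rfl⟩ ⟨b, l, rfl⟩
    refine ⟨a * (n : ℤ) ^ l + b * (n : ℤ) ^ k, k + l, ?_⟩
    push_cast
    rw [pow_add]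
    field_simp
  have hsymm : IsSymmSet (Qminus n) := by
    rintro x ⟨⟨a, k, rfl⟩, hx⟩
    refine ⟨⟨-a, k, ?_⟩, ?_⟩
    · push_cast
      rw [neg_div]
    · rwa [abs_neg]
  have ha : ∀ x ∈ Qminus n, x / (n : ℚ) ∈ Qminus n := by
    rintro x ⟨hx, hx1⟩
    refine ⟨by simpa using hdiv x 1 hx, ?_⟩
    rw [abs_div, abs_of_pos hn0, div_lt_one hn0]
    linarith
  have hc : ∀ x ∈ Qminus n, ∀ y ∈ Qminus n, (x + y) / (n : ℚ) ∈ Qminus n := by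
    rintro x ⟨hx, hx1⟩ y ⟨hy, hy1⟩
    refine ⟨by simpa using hdiv (x + y) 1 (hadd x y hx hy), ?_⟩
    rw [abs_div, abs_of_pos hn0, div_lt_one hn0]
    linarith [abs_add_le x y]
  refine ⟨hsymm, ⟨fun x hx => hx.1, ha, ?_, 1, ?_⟩, ?_, hc⟩
  · intro x hx
    obtain ⟨k, hk⟩ := pow_unbounded_of_one_lt |x| (show (1 : ℚ) < (n : ℚ) by linarith)
    refine ⟨k, hdiv x k hx, ?_⟩
    have hp : (0 : ℚ) < (n : ℚ) ^ k := pow_pos hn0 k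
    rwa [abs_div, abs_of_pos hp, div_lt_one hp]
  · simpa using hc
  · rw [Set.ssubset_iff_exists]
    refine ⟨?_, 1 / (n : ℚ), ⟨⟨1, 1, by simp⟩, ?_⟩, ?_⟩
    · rintro _ ⟨x, hx, rfl⟩
      exact ha x hx
    · rw [abs_div, abs_of_pos hn0, div_lt_one hn0, abs_one]
      linarith
    · rintro ⟨x, hx, hxe⟩
      have h1 : x = 1 := by
        have h2 : x / (n : ℚ) = 1 / (n : ℚ) := hxe
        field_simp at h2
        exact h2
      have h3 := hx.2
      rw [h1, abs_one] at h3
      exact lt_irrefl _ h3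
end

section
/- Fix an integer n ≥ 2 and let H = ℤ[1/n] with α(x) = n·x. Suppose Q ⊆ H is a symmetric subset confining for H under the action of α, S ⊆ H is a symmetric subset, and K ≥ 0 is such that α^K(g) ∈ Q for all g ∈ S. Then the set Q̄ = Q ∪ ⋃_{i≥0} α^i(S) is symmetric and confining for H under the action of α, and moreover every y ∈ Q̄ satisfies α^j(y) ∈ Q for some 0 ≤ j ≤ K. -/
/-- `Q ⊆ H` is confining for `H = ℤ[1/n]` under the action of `α : x ↦ n·x`. -/
def Confining (n : ℕ) (Q : Set ℚ) : Prop :=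
  (∀ x ∈ Q, inH n x) ∧
  (∀ x ∈ Q, (n : ℚ) * x ∈ Q) ∧
  (∀ x : ℚ, inH n x → ∃ k : ℕ, (n : ℚ) ^ k * x ∈ Q) ∧
  (∃ k₀ : ℕ, ∀ x ∈ Q, ∀ y ∈ Q, (n : ℚ) ^ k₀ * (x + y) ∈ Q)

/-- The enlargement `Q̄ = Q ∪ ⋃_{i ≥ 0} α^i(S)`. -/
def Qbar (n : ℕ) (Q S : Set ℚ) : Set ℚ :=
  Q ∪ ⋃ i : ℕ, (fun x : ℚ => (n : ℚ) ^ i * x) '' S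

/-- If `Q` is symmetric confining under `α`, `S ⊆ H` is symmetric, and `α^K(S) ⊆ Q`,
then `Q̄ = Q ∪ ⋃_{i≥0} α^i(S)` is symmetric and confining under `α`, and every
`y ∈ Q̄` satisfies `α^j(y) ∈ Q` for some `0 ≤ j ≤ K`. -/
theorem Qbar_confining (n : ℕ) (hn : 2 ≤ n) (Q S : Set ℚ)
    (hQsymm : IsSymmSet Q) (hQconf : Confining n Q)
    (hSsymm : IsSymmSet S) (hSH : ∀ x ∈ S, inH n x)
    (K : ℕ) (hK : ∀ g ∈ S, (n : ℚ) ^ K * g ∈ Q) :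
    IsSymmSet (Qbar n Q S) ∧ Confining n (Qbar n Q S) ∧
      (∀ y ∈ Qbar n Q S, ∃ j ≤ K, (n : ℚ) ^ j * y ∈ Q) := by
  obtain ⟨h1, h2, h3, k₀, h4⟩ := hQconf
  have hpow : ∀ (i : ℕ) (x : ℚ), x ∈ Q → (n : ℚ) ^ i * x ∈ Q := by
    intro i x hx
    induction i with
    | zero => simpa using hx
    | succ k ih =>
      have := h2 _ ih
      rwa [← mul_assoc, ← pow_succ'] at this
  have hmem : ∀ y, y ∈ Qbar n Q S ↔ y ∈ Q ∨ ∃ i : ℕ, ∃ x ∈ S, (n : ℚ) ^ i * x = y := by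
    intro y
    simp [Qbar]
  have hbar : ∀ y ∈ Qbar n Q S, (n : ℚ) ^ K * y ∈ Q := by
    intro y hy
    rcases (hmem y).1 hy with h | ⟨i, x, hx, rfl⟩
    · exact hpow K y h
    · rw [mul_left_comm]
      exact hpow i _ (hK x hx)
  refine ⟨?_, ⟨?_, ?_, ?_, k₀ + K, ?_⟩, fun y hy => ⟨K, le_rfl, hbar y hy⟩⟩
  · intro y hy
    rw [hmem] at hy ⊢
    rcases hy with h | ⟨i, x, hx, rfl⟩
    · exact Or.inl (hQsymm y h)
    · exact Or.inr ⟨i, -x, hSsymm x hx, by ring⟩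
  · intro y hy
    rcases (hmem y).1 hy with h | ⟨i, x, hx, rfl⟩
    · exact h1 y h
    · obtain ⟨a, k, rfl⟩ := hSH x hx
      exact ⟨(n : ℤ) ^ i * a, k, by push_cast; ring⟩
  · intro y hy
    rw [hmem] at hy ⊢
    rcases hy with h | ⟨i, x, hx, rfl⟩
    · exact Or.inl (h2 y h)
    · exact Or.inr ⟨i + 1, x, hx, by ring⟩
  · intro x hx
    obtain ⟨k, hk⟩ := h3 x hx
    exact ⟨k, Or.inl hk⟩
  · intro x hx y hy
    have := h4 _ (hbar x hx) _ (hbar y hy)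
    rw [← mul_add, ← mul_assoc, ← pow_add] at this
    exact Or.inl this
end

section
/- Fix an integer n ≥ 2 and let H = ℤ[1/n] with α(x) = n·x. Suppose Q ⊆ H is a symmetric subset confining for H under the action of α with 1 ∈ Q. Then there exists R ≥ 1 such that every integer m ∈ ℤ can be written as a sum of at most R elements of Q. -/
/-- If `Q` is a symmetric confining subset for `H = ℤ[1/n]` under `α : x ↦ n·x`
with `1 ∈ Q`, then there is `R ≥ 1` such that every integer is a sum of at most
`R` elements of `Q`. -/
theorem integers_bounded_word_length (n : ℕ) (hn : 2 ≤ n) (Q : Set ℚ)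
    (hQsymm : IsSymmSet Q) (hQconf : Confining n Q) (hone : (1 : ℚ) ∈ Q) :
    ∃ R : ℕ, 1 ≤ R ∧ ∀ m : ℤ, ∃ r ≤ R, ∃ f : ℕ → ℚ,
      (∀ i < r, f i ∈ Q) ∧ (m : ℚ) = ∑ i ∈ Finset.range r, f i := by
  obtain ⟨-, hmul, habs, k₀, hk⟩ := hQconf
  have h0 : (0 : ℚ) ∈ Q := by
    obtain ⟨k, h⟩ := habs 0 ⟨0, 0, by simp⟩
    simpa using h
  obtain ⟨B, hBdef⟩ : ∃ B : ℕ, B = n ^ (k₀ + 1) := ⟨_, rfl⟩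
  have hB : 2 ≤ B := by
    rw [hBdef, pow_succ]
    have : 1 ≤ n ^ k₀ := Nat.one_le_pow _ _ (by omega)
    nlinarith
  have hadd : ∀ x ∈ Q, ∀ y ∈ Q, (B : ℚ) * (x + y) ∈ Q := by
    intro x hx y hy
    have h := hmul _ (hk x hx y hy)
    rw [hBdef]
    push_cast
    rw [pow_succ']
    rwa [mul_assoc]
  have hdig : ∀ (c i : ℕ), (if i < c then (1 : ℚ) else 0) ∈ Q := by
    intro c i
    split_ifs <;> assumption
  have hdigsum : ∀ c < B, ∑ i ∈ Finset.range B, (if i < c then (1 : ℚ) else 0) = c := by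
    intro c hc
    rw [← Finset.sum_filter]
    have : (Finset.range B).filter (fun i => i < c) = Finset.range c := by
      ext i
      simp only [Finset.mem_filter, Finset.mem_range]
      omega
    rw [this]
    simp
  have key : ∀ m : ℕ, ∃ g : ℕ → ℚ, (∀ i, g i ∈ Q) ∧
      (B : ℚ) * m = ∑ i ∈ Finset.range B, g i := by
    intro m
    induction m using Nat.strong_induction_on with
    | _ m ih =>
      rcases Nat.eq_zero_or_pos m with rfl | hm
      · exact ⟨fun _ => 0, fun _ => h0, by simp⟩
      · obtain ⟨g, hg, hs⟩ := ih (m / B) (Nat.div_lt_self hm hB)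
        refine ⟨fun i => (B : ℚ) * (g i + if i < m % B then 1 else 0),
          fun i => hadd _ (hg i) _ (hdig _ _), ?_⟩
        rw [← Finset.mul_sum, Finset.sum_add_distrib, ← hs,
          hdigsum _ (Nat.mod_lt _ (by omega))]
        congr 1
        exact_mod_cast (Nat.div_add_mod m B).symm
  have nat : ∀ m : ℕ, ∃ f : ℕ → ℚ, (∀ i, f i ∈ Q) ∧
      (m : ℚ) = ∑ i ∈ Finset.range (B + B), f i := by
    intro m
    obtain ⟨g, hg, hs⟩ := key (m / B)
    refine ⟨fun i => if i < B then g i else if i - B < m % B then 1 else 0, ?_, ?_⟩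
    · intro i
      dsimp only
      by_cases h : i < B
      · rw [if_pos h]
        exact hg i
      · rw [if_neg h]
        exact hdig _ _
    · rw [Finset.sum_range_add]
      have e1 : ∑ i ∈ Finset.range B,
          (if i < B then g i else if i - B < m % B then 1 else 0) =
          ∑ i ∈ Finset.range B, g i :=
        Finset.sum_congr rfl fun i hi => if_pos (Finset.mem_range.1 hi)
      have e2 : ∑ i ∈ Finset.range B,
          (if B + i < B then g (B + i) else if B + i - B < m % B then (1 : ℚ) else 0) =
          ∑ i ∈ Finset.range B, (if i < m % B then (1 : ℚ) else 0) :=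
        Finset.sum_congr rfl fun i _ => by
          rw [if_neg (by omega), Nat.add_sub_cancel_left]
      rw [e1, e2, ← hs, hdigsum _ (Nat.mod_lt _ (by omega))]
      exact_mod_cast (Nat.div_add_mod m B).symm
  refine ⟨B + B, by omega, fun m => ⟨B + B, le_rfl, ?_⟩⟩
  obtain ⟨f, hf, hs⟩ := nat m.natAbs
  rcases Int.natAbs_eq m with h | h
  · refine ⟨f, fun i _ => hf i, ?_⟩
    rw [← hs, h]
    simp
  · refine ⟨fun i => - f i, fun i _ => hQsymm _ (hf i), ?_⟩
    rw [Finset.sum_neg_distrib, ← hs, h]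
    simp
end

section
/- Fix an integer n ≥ 2 and let H = ℤ[1/n] with α(x) = n·x. If Q ⊆ H is a symmetric subset confining for H under the action of α, then there exists K ≥ 0 such that n^K·m ∈ Q for every integer m ∈ ℤ (that is, α^K(ℤ) ⊆ Q). -/
/-- If `Q` is a symmetric confining subset for `H = ℤ[1/n]` under `α : x ↦ n·x`,
then there exists `K ≥ 0` with `α^K(ℤ) ⊆ Q`, i.e. `n^K · m ∈ Q` for every `m ∈ ℤ`. -/
theorem exists_pow_smul_int_mem (n : ℕ) (hn : 2 ≤ n) (Q : Set ℚ)
    (hQsymm : IsSymmSet Q) (hQconf : Confining n Q) :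
    ∃ K : ℕ, ∀ m : ℤ, (n : ℚ) ^ K * (m : ℚ) ∈ Q := by
  obtain ⟨-, ha, hb, k₀, hc⟩ := hQconf
  have hup : ∀ (j : ℕ) (x : ℚ), x ∈ Q → (n : ℚ) ^ j * x ∈ Q := by
    intro j x hx
    induction j with
    | zero => simpa using hx
    | succ j ih =>
      have := ha _ ih
      rwa [← mul_assoc, ← pow_succ'] at this
  -- digits
  have hdig : ∀ N : ℕ, ∃ K : ℕ, ∀ d < N, (n : ℚ) ^ K * (d : ℚ) ∈ Q := by
    intro N
    induction N with
    | zero => exact ⟨0, fun d hd => absurd hd (Nat.not_lt_zero d)⟩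
    | succ N ih =>
      obtain ⟨K, hK⟩ := ih
      obtain ⟨k, hk⟩ := hb (N : ℚ) ⟨(N : ℤ), 0, by simp⟩
      refine ⟨K + k, fun d hd => ?_⟩
      rcases Nat.lt_succ_iff_lt_or_eq.mp hd with h | h
      · have := hup k _ (hK d h)
        rwa [← mul_assoc, ← pow_add, add_comm] at this
      · subst h
        have := hup K _ hk
        rwa [← mul_assoc, ← pow_add] at this
  have hN : 1 < n ^ (k₀ + 1) := Nat.one_lt_pow (by omega) (by omega)
  obtain ⟨K, hK⟩ := hdig (n ^ (k₀ + 1))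
  have hnat : ∀ m : ℕ, (n : ℚ) ^ (K + (k₀ + 1)) * (m : ℚ) ∈ Q := by
    intro m
    induction m using Nat.strong_induction_on with
    | _ m ih =>
      rcases Nat.eq_zero_or_pos m with h0 | hpos
      · subst h0
        have := hK 0 (by omega)
        simpa using this
      · have h1 := ih (m / n ^ (k₀ + 1)) (Nat.div_lt_self hpos hN)
        have h2 := hK (m % n ^ (k₀ + 1)) (Nat.mod_lt _ (by omega))
        have h3 := ha _ (hc _ h2 _ h1)
        have h4 : (m : ℚ) = (n : ℚ) ^ (k₀ + 1) * ((m / n ^ (k₀ + 1) : ℕ) : ℚ)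
            + ((m % n ^ (k₀ + 1) : ℕ) : ℚ) := by
          exact_mod_cast (Nat.div_add_mod m (n ^ (k₀ + 1))).symm
        rw [h4]
        convert h3 using 1
        ring
  refine ⟨K + (k₀ + 1), fun m => ?_⟩
  obtain ⟨a, rfl | rfl⟩ := m.eq_nat_or_neg
  · simpa using hnat a
  · simpa using hQsymm _ (hnat a)
end

section
/- Fix an integer n ≥ 2 and let H = ℤ[1/n] with α(x) = n·x. If Q ⊆ H is a symmetric subset confining for H under the action of α, then L(Q) is an ideal of the ring ℤ_n of n-adic integers: 0 ∈ L(Q), L(Q) is closed under addition, and L(Q) is closed under multiplication by arbitrary elements of ℤ_n. -/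
/-- Membership in `ℤ_n`, realized as the inverse limit of the rings `ℤ/n^lℤ` inside
the product ring `∀ l, ℤ/n^lℤ`: the coordinates are compatible under reduction. -/
def ZnMem (n : ℕ) (x : ∀ l : ℕ, ZMod (n ^ l)) : Prop :=
  ∀ (k l : ℕ) (h : k ≤ l), ZMod.castHom (pow_dvd_pow n h) (ZMod (n ^ k)) (x l) = x k

/-- `I` is an ideal of `ℤ_n`: a subset of `ℤ_n` containing `0`, closed under addition
and under multiplication by arbitrary elements of `ℤ_n`. -/
def IsZnIdeal (n : ℕ) (I : Set (∀ l : ℕ, ZMod (n ^ l))) : Prop :=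
  (∀ x ∈ I, ZnMem n x) ∧ (0 ∈ I) ∧ (∀ x ∈ I, ∀ y ∈ I, x + y ∈ I) ∧
  (∀ r, ZnMem n r → ∀ x ∈ I, r * x ∈ I)

/-- The set `L(Q) ⊆ ℤ_n`: those `x ∈ ℤ_n` such that for every `t ≥ 1` there is a
nonnegative `a ∈ Q` whose fractional part equals `v_t(x)/n^t`. -/
def LSet (n : ℕ) (Q : Set ℚ) : Set (∀ l : ℕ, ZMod (n ^ l)) :=
  {x | ZnMem n x ∧ ∀ t : ℕ, 1 ≤ t →
    ∃ a ∈ Q, 0 ≤ a ∧ Int.fract a = ((x t).val : ℚ) / (n : ℚ) ^ t}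

lemma LAux_iff (n : ℕ) (hn : 2 ≤ n) (a : ℚ) (t : ℕ) (z : ZMod (n ^ t)) :
    Int.fract a = (z.val : ℚ) / (n : ℚ) ^ t ↔
      ∃ m : ℤ, a = (m : ℚ) / (n : ℚ) ^ t ∧ (m : ZMod (n ^ t)) = z := by
  have hn0 : (n : ℚ) ^ t ≠ 0 := by positivity
  have hpos : (0 : ℚ) < (n : ℚ) ^ t := by positivity
  haveI : NeZero (n ^ t) := ⟨by positivity⟩
  constructor
  · intro h
    refine ⟨⌊a⌋ * (n : ℤ) ^ t + (z.val : ℤ), ?_, ?_⟩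
    · have h1 := Int.floor_add_fract a
      rw [h] at h1
      push_cast
      rw [add_div, mul_div_cancel_right₀ _ hn0]
      exact h1.symm
    · have : ((n : ZMod (n ^ t)) ^ t) = 0 := by
        have := ZMod.natCast_self (n ^ t)
        push_cast at this
        exact this
      push_cast
      rw [this]
      simp
  · rintro ⟨m, rfl, rfl⟩
    rw [Int.fract_eq_iff]
    refine ⟨by positivity, ?_, ?_⟩
    · rw [div_lt_one hpos]
      exact_mod_cast ZMod.val_lt (m : ZMod (n ^ t))
    · have h2 : (((m : ZMod (n ^ t)).val : ℤ)) = m % ((n ^ t : ℕ) : ℤ) := ZMod.val_intCast m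
      have h3 := Int.emod_add_mul_ediv m ((n ^ t : ℕ) : ℤ)
      refine ⟨m / ((n ^ t : ℕ) : ℤ), ?_⟩
      rw [← h2] at h3
      have h4 : (((m : ZMod (n ^ t)).val : ℚ)) + (n : ℚ) ^ t * ((m / ((n ^ t : ℕ) : ℤ) : ℤ) : ℚ)
          = (m : ℚ) := by
        exact_mod_cast h3
      rw [← sub_div, div_eq_iff hn0, ← h4]
      ring

/-- If `Q ⊆ H = ℤ[1/n]` is a symmetric confining subset under `α : x ↦ n·x`,
then `L(Q)` is an ideal of the ring `ℤ_n` of `n`-adic integers. -/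
theorem LSet_isIdeal (n : ℕ) (hn : 2 ≤ n) (Q : Set ℚ)
    (hQsymm : IsSymmSet Q) (hQconf : Confining n Q) :
    IsZnIdeal n (LSet n Q) := by
  obtain ⟨-, -, habs, k₀, hadd⟩ := hQconf
  have hz : (0 : ∀ l : ℕ, ZMod (n ^ l)) ∈ LSet n Q := by
    refine ⟨fun k l h => by simp only [Pi.zero_apply, map_zero], fun t _ => ⟨0, ?_, le_rfl, by simp⟩⟩
    obtain ⟨k, hk⟩ := habs 0 ⟨0, 0, by simp⟩
    simpa using hk
  have hA : ∀ x ∈ LSet n Q, ∀ y ∈ LSet n Q, x + y ∈ LSet n Q := by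
    rintro x ⟨hx, hx'⟩ y ⟨hy, hy'⟩
    refine ⟨fun k l h => by simp only [Pi.add_apply, map_add, hx k l h, hy k l h], fun t ht => ?_⟩
    obtain ⟨a, haQ, ha0, ha⟩ := hx' (t + k₀) (by omega)
    obtain ⟨b, hbQ, hb0, hb⟩ := hy' (t + k₀) (by omega)
    refine ⟨_, hadd a haQ b hbQ, by positivity, ?_⟩
    rw [LAux_iff n hn] at ha hb ⊢
    obtain ⟨p, rfl, hp⟩ := ha
    obtain ⟨q, rfl, hq⟩ := hb
    refine ⟨p + q, ?_, ?_⟩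
    · have hn0 : (n : ℚ) ≠ 0 := by positivity
      push_cast
      rw [pow_add]
      field_simp
    · rw [Pi.add_apply, ← hx t (t + k₀) (by omega), ← hy t (t + k₀) (by omega), ← hp, ← hq,
        map_intCast, map_intCast]
      push_cast
      rfl
  refine ⟨fun x hx => hx.1, hz, hA, ?_⟩
  intro r hr x hx
  have hM : ∀ m : ℕ, m • x ∈ LSet n Q := by
    intro m
    induction m with
    | zero => simpa using hz
    | succ m ih => rw [succ_nsmul]; exact hA _ ih _ hx
  refine ⟨fun k l h => by simp only [Pi.mul_apply, map_mul, hr k l h, hx.1 k l h], fun t ht => ?_⟩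
  have h := (hM (r t).val).2 t ht
  haveI : NeZero (n ^ t) := ⟨by positivity⟩
  have e : ((r t).val • x) t = (r * x) t := by
    rw [Pi.smul_apply, Pi.mul_apply, nsmul_eq_mul, ZMod.natCast_zmod_val]
  rwa [e] at h
end

section
/- Fix an integer n ≥ 2 and let H = ℤ[1/n] with α(x) = n·x. If Q ⊆ H is a symmetric subset confining for H under the action of α, then there exists M ≥ 0 such that n^M·a ∈ Q for every a ∈ S(L(Q)) (that is, S(L(Q)) ⊆ α^{-M}(Q)). -/
/-- The set `S(𝔟) ⊆ H = ℤ[1/n]` associated to a subset `𝔟 ⊆ ℤ_n`: those `x ∈ H`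
such that for some `s ≥ 0` with `n^s·x ∈ ℤ` there is `b ∈ 𝔟` with the fractional
part of `|x|` equal to `v_s(b)/n^s`. -/
def SIdeal (n : ℕ) (I : Set (∀ l : ℕ, ZMod (n ^ l))) : Set ℚ :=
  {x | inH n x ∧ ∃ s : ℕ, (∃ m : ℤ, (n : ℚ) ^ s * x = (m : ℚ)) ∧
    ∃ b ∈ I, Int.fract |x| = ((b s).val : ℚ) / (n : ℚ) ^ s}

theorem conf_pow_mul (n : ℕ) (Q : Set ℚ) (h : ∀ x ∈ Q, (n : ℚ) * x ∈ Q) (k : ℕ) :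
    ∀ x ∈ Q, (n : ℚ) ^ k * x ∈ Q := by
  induction k with
  | zero => intro x hx; simpa using hx
  | succ k ih =>
    intro x hx
    have := h _ (ih x hx)
    rwa [← mul_assoc, ← pow_succ'] at this

theorem conf_digits (n : ℕ) (Q : Set ℚ) (h : Confining n Q) (K : ℕ) :
    ∃ d : ℕ, ∀ c : ℕ, c < K → (n : ℚ) ^ d * c ∈ Q := by
  obtain ⟨-, h2, h3, -⟩ := h
  induction K with
  | zero => exact ⟨0, fun c hc => absurd hc (Nat.not_lt_zero c)⟩
  | succ K ih =>
    obtain ⟨d, hd⟩ := ih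
    obtain ⟨k, hk⟩ := h3 (K : ℚ) ⟨K, 0, by simp⟩
    refine ⟨d + k, fun c hc => ?_⟩
    rcases Nat.lt_succ_iff_lt_or_eq.mp hc with hc | rfl
    · have := conf_pow_mul n Q h2 k _ (hd c hc)
      rwa [← mul_assoc, ← pow_add, add_comm k d] at this
    · have := conf_pow_mul n Q h2 d _ hk
      rwa [← mul_assoc, ← pow_add] at this

theorem conf_nat (n : ℕ) (hn : 2 ≤ n) (Q : Set ℚ) (h : Confining n Q) :
    ∃ e : ℕ, ∀ N : ℕ, (n : ℚ) ^ e * N ∈ Q := by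
  have h' := h
  obtain ⟨-, h2, h3, k, hk⟩ := h
  have hB : 1 < n ^ (k + 1) := Nat.one_lt_pow (by omega) (by omega)
  obtain ⟨d, hd⟩ := conf_digits n Q h' (n ^ (k + 1))
  refine ⟨d + (k + 1), fun N => ?_⟩
  induction N using Nat.strong_induction_on with
  | _ N ih =>
    by_cases hN : N < n ^ (k + 1)
    · have := conf_pow_mul n Q h2 (k + 1) _ (hd N hN)
      rwa [← mul_assoc, ← pow_add, add_comm (k + 1) d] at this
    · have hlt : N / n ^ (k + 1) < N := Nat.div_lt_self (by omega) hB
      have hc : N % n ^ (k + 1) < n ^ (k + 1) := Nat.mod_lt _ (by omega)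
      have key := h2 _ (hk _ (hd _ hc) _ (ih _ hlt))
      have e : (N : ℚ) = (n : ℚ) ^ (k + 1) * ((N / n ^ (k + 1) : ℕ) : ℚ)
          + ((N % n ^ (k + 1) : ℕ) : ℚ) := by
        exact_mod_cast (Nat.div_add_mod N (n ^ (k + 1))).symm
      generalize ((N / n ^ (k + 1) : ℕ) : ℚ) = u at *
      generalize ((N % n ^ (k + 1) : ℕ) : ℚ) = v at *
      rw [e]
      convert key using 1
      ring

/-- If `Q ⊆ H = ℤ[1/n]` is a symmetric confining subset under `α : x ↦ n·x`, then
there is `M ≥ 0` with `S(L(Q)) ⊆ α^{-M}(Q)`, i.e. `n^M·a ∈ Q` for all `a ∈ S(L(Q))`. -/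
theorem SIdeal_LSet_subset (n : ℕ) (hn : 2 ≤ n) (Q : Set ℚ)
    (hQsymm : IsSymmSet Q) (hQconf : Confining n Q) :
    ∃ M : ℕ, ∀ a ∈ SIdeal n (LSet n Q), (n : ℚ) ^ M * a ∈ Q := by
  have hconf := hQconf
  obtain ⟨e, he⟩ := conf_nat n hn Q hQconf
  obtain ⟨-, h2, -, k, hk⟩ := hQconf
  have hint : ∀ m : ℤ, (n : ℚ) ^ e * m ∈ Q := by
    intro m
    obtain ⟨N, rfl | rfl⟩ := m.eq_nat_or_neg
    · simpa using he N
    · simpa using hQsymm _ (he N)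
  refine ⟨k + e, ?_⟩
  rintro a ⟨-, s, ⟨m, hm⟩, b, ⟨-, hb⟩, hfr⟩
  rcases Nat.eq_zero_or_pos s with rfl | hs
  · have : a = m := by simpa using hm
    subst this
    have := conf_pow_mul n Q h2 k _ (hint m)
    rwa [← mul_assoc, ← pow_add] at this
  · obtain ⟨q, hq, -, hqf⟩ := hb s hs
    obtain ⟨z, hz⟩ := Int.fract_eq_fract.mp (hfr.trans hqf.symm)
    have key := hk _ (conf_pow_mul n Q h2 e _ hq) _ (hint z)
    have key2 : (n : ℚ) ^ (k + e) * |a| ∈ Q := by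
      convert key using 1
      rw [← hz]
      ring
    rcases abs_choice a with h | h
    · rwa [h] at key2
    · rw [h] at key2
      simpa using hQsymm _ key2
end

section
/- Fix an integer n ≥ 2 and let H = ℤ[1/n] with α(x) = n·x. If Q ⊆ H is a symmetric subset confining for H under the action of α, then there exists k ≥ 0 such that n^k·a ∈ S(L(Q)) for every a ∈ Q (that is, Q ⊆ α^{-k}(S(L(Q)))). -/
theorem aux_pow (n : ℕ) (Q : Set ℚ) (h : ∀ x ∈ Q, (n : ℚ) * x ∈ Q) (j : ℕ) :
    ∀ x ∈ Q, (n : ℚ) ^ j * x ∈ Q := by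
  induction j with
  | zero => intro x hx; simpa using hx
  | succ j ih =>
    intro x hx
    have := h _ (ih x hx)
    rwa [← mul_assoc, ← pow_succ'] at this

theorem aux_pow_le (n : ℕ) (Q : Set ℚ) (h : ∀ x ∈ Q, (n : ℚ) * x ∈ Q) {i j : ℕ} (hij : i ≤ j)
    {x : ℚ} (hx : (n : ℚ) ^ i * x ∈ Q) : (n : ℚ) ^ j * x ∈ Q := by
  have := aux_pow n Q h (j - i) _ hx
  rwa [← mul_assoc, ← pow_add, Nat.sub_add_cancel hij] at this

theorem aux_mul (n : ℕ) (hn : 2 ≤ n) (Q : Set ℚ) (hs : IsSymmSet Q)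
    (h : ∀ x ∈ Q, (n : ℚ) * x ∈ Q) (h0 : (0 : ℚ) ∈ Q) (k : ℕ) (hk : 1 ≤ k)
    (hadd : ∀ x ∈ Q, ∀ y ∈ Q, (n : ℚ) ^ k * (x + y) ∈ Q) :
    ∃ e : ℕ, ∀ a ∈ Q, ∀ m : ℤ, (n : ℚ) ^ e * (m * a) ∈ Q := by
  have hA : ∀ d : ℕ, ∃ e : ℕ, ∀ a ∈ Q, (n : ℚ) ^ e * (d * a) ∈ Q := by
    intro d
    induction d with
    | zero => exact ⟨0, fun a _ => by simpa using h0⟩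
    | succ d ih =>
      obtain ⟨e, he⟩ := ih
      refine ⟨k + e, fun a ha => ?_⟩
      have := hadd _ (he a ha) _ (aux_pow n Q h e a ha)
      convert this using 1
      push_cast; ring
  have hB : ∀ D : ℕ, ∃ e : ℕ, ∀ d < D, ∀ a ∈ Q, (n : ℚ) ^ e * (d * a) ∈ Q := by
    intro D
    induction D with
    | zero => exact ⟨0, fun d hd => by omega⟩
    | succ D ih =>
      obtain ⟨e, he⟩ := ih
      obtain ⟨e', he'⟩ := hA D
      refine ⟨max e e', fun d hd a ha => ?_⟩
      rcases Nat.lt_succ_iff_lt_or_eq.mp hd with hd | rfl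
      · exact aux_pow_le n Q h (le_max_left _ _) (he d hd a ha)
      · exact aux_pow_le n Q h (le_max_right _ _) (he' a ha)
  obtain ⟨e, he⟩ := hB (n ^ k)
  have hC : ∀ a ∈ Q, ∀ m : ℕ, (n : ℚ) ^ (e + k) * (m * a) ∈ Q := by
    intro a ha m
    induction m using Nat.strong_induction_on with
    | _ m ih =>
      rcases Nat.eq_zero_or_pos m with rfl | hm
      · simpa using h0
      · have h1 : 1 < n ^ k := Nat.one_lt_pow (by omega) (by omega)
        have h2 := ih (m / n ^ k) (Nat.div_lt_self hm h1)
        have h3 := he (m % n ^ k) (Nat.mod_lt _ (by omega)) a ha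
        have h4 := hadd _ h3 _ h2
        have h5 : (m : ℚ) = ((m % n ^ k : ℕ) : ℚ) + (n : ℚ) ^ k * ((m / n ^ k : ℕ) : ℚ) := by
          exact_mod_cast (Nat.mod_add_div m (n ^ k)).symm
        convert h4 using 1
        rw [h5, pow_add]; push_cast; ring
  refine ⟨e + k, fun a ha m => ?_⟩
  obtain ⟨m, rfl | rfl⟩ := m.eq_nat_or_neg
  · exact_mod_cast hC a ha m
  · have := hs _ (hC a ha m)
    convert this using 1
    push_cast; ring

/-- rationals with denominator dividing a power of `P`. -/
def ZP (P : ℕ) (y : ℚ) : Prop := ∃ (w : ℤ) (r : ℕ), y = (w : ℚ) / (P : ℚ) ^ r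

theorem ZP_div (n : ℕ) (hn : 2 ≤ n) (P : ℕ) (hP : 1 ≤ P) (y : ℚ) (hy : ZP P y) :
    ∃ y', ZP P y' ∧ ∃ j : ℤ, (n : ℚ) * y' = y + j := by
  obtain ⟨w, r, rfl⟩ := hy
  haveI : NeZero n := ⟨by omega⟩
  obtain ⟨L, T, hT, hLT⟩ : ∃ L T : ℕ, 1 ≤ T ∧ (P : ZMod n) ^ (L + T) = (P : ZMod n) ^ L := by
    obtain ⟨i, j, hij, he⟩ :=
      Finite.exists_ne_map_eq_of_infinite (fun i : ℕ => (P : ZMod n) ^ i)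
    rcases lt_or_gt_of_ne hij with h | h
    · exact ⟨i, j - i, by omega, by rw [Nat.add_sub_cancel' h.le]; exact he.symm⟩
    · exact ⟨j, i - j, by omega, by rw [Nat.add_sub_cancel' h.le]; exact he⟩
  have hper : ∀ i : ℕ, (P : ZMod n) ^ (L + T * i) = (P : ZMod n) ^ L := by
    intro i
    induction i with
    | zero => simp
    | succ i ih =>
      rw [show L + T * (i + 1) = (L + T * i) + T by ring, pow_add, ih, ← pow_add, hLT]
  have hdvd : (n : ℤ) ∣ (P : ℤ) ^ L - (P : ℤ) ^ (L + T * r) := by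
    rw [← ZMod.intCast_zmod_eq_zero_iff_dvd]
    · push_cast; rw [hper, sub_self]
  obtain ⟨g, hg⟩ := hdvd
  have hP0 : (P : ℚ) ≠ 0 := by positivity
  have hgq : (P : ℚ) ^ L - (P : ℚ) ^ (L + T * r) = n * g := by exact_mod_cast hg
  refine ⟨((w * g : ℤ) : ℚ) / (P : ℚ) ^ (r + L), ⟨_, _, rfl⟩, -w * P ^ (T * r - r), ?_⟩
  have hle : r ≤ T * r := Nat.le_mul_of_pos_left r hT
  have h1 : (P : ℚ) ^ (T * r) = (P : ℚ) ^ (T * r - r) * (P : ℚ) ^ r := by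
    rw [← pow_add, Nat.sub_add_cancel hle]
  rw [pow_add, h1] at hgq
  rw [pow_add]
  push_cast
  field_simp
  linear_combination (-(w : ℚ)) * hgq

theorem ZP_div_pow (n : ℕ) (hn : 2 ≤ n) (P : ℕ) (hP : 1 ≤ P) (y : ℚ) (hy : ZP P y) (t : ℕ) :
    ∃ y', ZP P y' ∧ ∃ j : ℤ, (n : ℚ) ^ t * y' = y + j := by
  induction t with
  | zero => exact ⟨y, hy, 0, by simp⟩
  | succ t ih =>
    obtain ⟨y', hy', j, hj⟩ := ih
    obtain ⟨y'', hy'', j', hj'⟩ := ZP_div n hn P hP y' hy'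
    refine ⟨y'', hy'', j + n ^ t * j', ?_⟩
    push_cast
    rw [pow_succ, mul_assoc, hj', mul_add, hj]; ring

theorem ZP_smul (n P : ℕ) (s : ℕ) (y : ℚ) (hy : ZP P y) : ZP P ((n : ℚ) ^ s * y) := by
  obtain ⟨w, r, rfl⟩ := hy
  exact ⟨n ^ s * w, r, by push_cast; ring⟩

/-- all of `ℤ[1/P]` lies in `Q` mod `ℤ` up to a bounded power of `n`. -/
def GoodP (n : ℕ) (Q : Set ℚ) (P : ℕ) : Prop :=
  ∃ K : ℕ, ∀ (y : ℚ), ZP P y → ∃ j : ℤ, (n : ℚ) ^ K * y + j ∈ Q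

theorem good_mul (n : ℕ) (Q : Set ℚ) (h : ∀ x ∈ Q, (n : ℚ) * x ∈ Q) (k : ℕ)
    (hadd : ∀ x ∈ Q, ∀ y ∈ Q, (n : ℚ) ^ k * (x + y) ∈ Q) (P p : ℕ) (hP : 1 ≤ P) (hp : 1 ≤ p)
    (hc : Nat.Coprime P p) (h1 : GoodP n Q P) (h2 : GoodP n Q p) : GoodP n Q (P * p) := by
  obtain ⟨K, hK⟩ := h1
  obtain ⟨K', hK'⟩ := h2
  refine ⟨k + (K + K'), ?_⟩
  rintro y ⟨w, r, rfl⟩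
  have hcop : IsCoprime ((P : ℤ) ^ r) ((p : ℤ) ^ r) :=
    (Nat.isCoprime_iff_coprime.mpr hc).pow
  obtain ⟨u, v, huv⟩ := hcop
  have huv' : (u : ℚ) * (P : ℚ) ^ r + v * (p : ℚ) ^ r = 1 := by exact_mod_cast huv
  have hP0 : (P : ℚ) ≠ 0 := by positivity
  have hp0 : (p : ℚ) ≠ 0 := by positivity
  obtain ⟨i, hi⟩ := hK (((w * v : ℤ) : ℚ) / (P : ℚ) ^ r) ⟨_, _, rfl⟩
  obtain ⟨j, hj⟩ := hK' (((w * u : ℤ) : ℚ) / (p : ℚ) ^ r) ⟨_, _, rfl⟩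
  have := hadd _ (aux_pow n Q h K' _ hi) _ (aux_pow n Q h K _ hj)
  refine ⟨n ^ k * (n ^ K' * i + n ^ K * j), ?_⟩
  convert this using 1
  have e : (w : ℚ) / ((P * p : ℕ) : ℚ) ^ r
      = ((w * v : ℤ) : ℚ) / (P : ℚ) ^ r + ((w * u : ℤ) : ℚ) / (p : ℚ) ^ r := by
    push_cast
    rw [mul_pow]
    field_simp
    linear_combination (-(w : ℚ)) * huv'
  rw [e, pow_add, pow_add]; push_cast; ring

theorem good_prime (n : ℕ) (Q : Set ℚ) (e : ℕ)
    (he : ∀ a ∈ Q, ∀ m : ℤ, (n : ℚ) ^ e * (m * a) ∈ Q) (p : ℕ) (hp : 1 ≤ p)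
    (hU : ∀ r : ℕ, ∃ a ∈ Q, p ^ r ∣ a.den) : GoodP n Q p := by
  refine ⟨e, ?_⟩
  rintro y ⟨w, r, rfl⟩
  obtain ⟨a, ha, N, hN⟩ := hU r
  have hcop : IsCoprime a.num (a.den : ℤ) := by
    rw [Int.isCoprime_iff_nat_coprime]; simpa using a.reduced
  obtain ⟨u, v, huv⟩ := hcop
  have hp0 : (p : ℚ) ≠ 0 := by positivity
  have hN0 : (N : ℚ) ≠ 0 := by
    intro h0
    have : N = 0 := by exact_mod_cast h0
    rw [this, mul_zero] at hN
    exact a.den_nz hN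
  have hd : (a.den : ℚ) = (p : ℚ) ^ r * N := by exact_mod_cast hN
  have huv' : (u : ℚ) * a.num + v * a.den = 1 := by exact_mod_cast huv
  have hanum : (a.num : ℚ) = a * a.den := (Rat.mul_den_eq_num a).symm
  rw [hanum, hd] at huv'
  refine ⟨- (n ^ e * (w * N * v)), ?_⟩
  convert he a ha (w * u * N) using 1
  push_cast
  field_simp
  linear_combination (-(n : ℚ) ^ e * w) * huv'

theorem fract_aux (n : ℕ) (hn : 2 ≤ n) (z : ℤ) (t : ℕ) :
    (((z : ZMod (n ^ t)).val : ℕ) : ℚ) / (n : ℚ) ^ t = Int.fract ((z : ℚ) / (n : ℚ) ^ t) := by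
  haveI : NeZero (n ^ t) := ⟨by positivity⟩
  have h1 : (((z : ZMod (n ^ t)).val : ℕ) : ℤ) = z % ((n ^ t : ℕ) : ℤ) := ZMod.val_intCast z
  have h2 : (((z : ZMod (n ^ t)).val : ℕ) : ℚ) = ((z % ((n ^ t : ℕ) : ℤ) : ℤ) : ℚ) := by
    exact_mod_cast h1
  have h3 := Int.fract_div_intCast_eq_div_intCast_mod (k := ℚ) (m := z) (n := n ^ t)
  rw [h2]
  push_cast at h3 ⊢
  exact h3.symm

/-- If `Q ⊆ H = ℤ[1/n]` is a symmetric confining subset under `α : x ↦ n·x`, then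
there is `k ≥ 0` with `Q ⊆ α^{-k}(S(L(Q)))`, i.e. `n^k·a ∈ S(L(Q))` for all `a ∈ Q`. -/
theorem subset_SIdeal_LSet (n : ℕ) (hn : 2 ≤ n) (Q : Set ℚ)
    (hQsymm : IsSymmSet Q) (hQconf : Confining n Q) :
    ∃ k : ℕ, ∀ a ∈ Q, (n : ℚ) ^ k * a ∈ SIdeal n (LSet n Q) := by
  obtain ⟨hH, hα, habs, k', hadd'⟩ := hQconf
  obtain ⟨k, hk, hadd⟩ : ∃ k : ℕ, 1 ≤ k ∧ ∀ x ∈ Q, ∀ y ∈ Q, (n : ℚ) ^ k * (x + y) ∈ Q :=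
    ⟨k' + 1, by omega, fun x hx y hy => aux_pow_le n Q hα (Nat.le_succ _) (hadd' x hx y hy)⟩
  have h0 : (0 : ℚ) ∈ Q := by
    obtain ⟨i, hi⟩ := habs 0 ⟨0, 0, by simp⟩
    simpa using hi
  obtain ⟨e, he⟩ := aux_mul n hn Q hQsymm hα h0 k hk hadd
  have hn0 : (n : ℚ) ≠ 0 := by positivity
  -- integers
  obtain ⟨c, hc⟩ : ∃ c : ℕ, ∀ m : ℤ, (n : ℚ) ^ c * m ∈ Q := by
    obtain ⟨i, hi⟩ := habs 1 ⟨1, 0, by simp⟩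
    refine ⟨e + i, fun m => ?_⟩
    convert he _ hi m using 1
    rw [pow_add]; ring
  classical
  let U : Finset ℕ := n.primeFactors.filter (fun p => ∀ r : ℕ, ∃ a ∈ Q, p ^ r ∣ a.den)
  have hgood : ∀ V : Finset ℕ, V ⊆ U → GoodP n Q (∏ p ∈ V, p) ∧ 1 ≤ ∏ p ∈ V, p := by
    intro V
    induction V using Finset.induction_on with
    | empty =>
      intro _
      refine ⟨⟨c, ?_⟩, by simp⟩
      rintro y ⟨w, r, rfl⟩
      exact ⟨0, by simpa using hc w⟩
    | insert p V hpV ih =>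
      intro hV
      obtain ⟨g1, g2⟩ := ih (fun x hx => hV (Finset.mem_insert_of_mem hx))
      have hpU := hV (Finset.mem_insert_self p V)
      have hpU' := (Finset.mem_filter.mp hpU)
      have hpp : p.Prime := Nat.prime_of_mem_primeFactors hpU'.1
      have hcop : Nat.Coprime (∏ q ∈ V, q) p := by
        apply Nat.Coprime.prod_left
        intro q hq
        have hqU := Finset.mem_filter.mp (hV (Finset.mem_insert_of_mem hq))
        have hqp : q.Prime := Nat.prime_of_mem_primeFactors hqU.1
        exact (Nat.coprime_primes hqp hpp).mpr (fun h => hpV (h ▸ hq))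
      rw [Finset.prod_insert hpV, mul_comm]
      exact ⟨good_mul n Q hα k hadd _ p g2 hpp.one_lt.le hcop g1
        (good_prime n Q e he p hpp.one_lt.le hpU'.2), Nat.mul_pos g2 hpp.pos⟩
  obtain ⟨⟨K, hK⟩, hP⟩ := hgood U subset_rfl
  set P := ∏ p ∈ U, p with hPdef
  -- nonnegative representatives
  have hrep : ∀ y, ZP P y → ∃ q ∈ Q, 0 ≤ q ∧ ∃ j : ℤ, q = y + j := by
    intro y hy
    obtain ⟨y', hy', j, hj⟩ := ZP_div_pow n hn P hP y hy (k + K)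
    obtain ⟨i, hi⟩ := hK y' hy'
    obtain ⟨g, hg⟩ := exists_nat_ge (-((n : ℚ) ^ K * y' + i))
    refine ⟨_, hadd _ hi _ (hc g), ?_, j + n ^ k * (i + n ^ c * g), ?_⟩
    · have h1 : (1 : ℚ) ≤ (n : ℚ) ^ c := one_le_pow₀ (by exact_mod_cast (by omega : 1 ≤ n))
      have h2 : (g : ℚ) ≤ (n : ℚ) ^ c * g := le_mul_of_one_le_left (by positivity) h1
      apply mul_nonneg (by positivity)
      push_cast
      linarith
    · push_cast
      rw [pow_add] at hj
      linear_combination hj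
  -- bounded primes
  obtain ⟨R, hR⟩ : ∃ R : ℕ, ∀ p ∈ n.primeFactors, p ∉ U → ∀ a ∈ Q, ¬ p ^ R ∣ a.den := by
    have h1 : ∀ p : ℕ, ∃ r : ℕ, p ∈ n.primeFactors → p ∉ U → ∀ a ∈ Q, ¬ p ^ r ∣ a.den := by
      intro p
      by_cases hp : p ∈ n.primeFactors ∧ p ∉ U
      · have : ¬ ∀ r : ℕ, ∃ a ∈ Q, p ^ r ∣ a.den :=
          fun h => hp.2 (Finset.mem_filter.mpr ⟨hp.1, h⟩)
        push Not at this
        obtain ⟨r, hr⟩ := this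
        exact ⟨r, fun _ _ => hr⟩
      · exact ⟨0, fun h h' => absurd ⟨h, h'⟩ hp⟩
    choose r hr using h1
    refine ⟨n.primeFactors.sup r, fun p hp hpU a ha hd => hr p hp hpU a ha ?_⟩
    exact (pow_dvd_pow p (Finset.le_sup hp)).trans hd
  have hZP : ∀ a ∈ Q, ZP P ((n : ℚ) ^ R * |a|) := by
    intro a ha
    have hd : a.den ∣ n ^ R * P ^ a.den := by
      rw [Nat.dvd_iff_prime_pow_dvd_dvd]
      intro p j hp hj
      rcases Nat.eq_zero_or_pos j with rfl | hj0
      · simp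
      by_cases hpU : p ∈ U
      · have h1 : p ∣ P := Finset.dvd_prod_of_mem _ hpU
        have h2 : j ≤ a.den := by
          have h3 := Nat.le_of_dvd a.den_pos hj
          have h4 : j < p ^ j := Nat.lt_pow_self hp.one_lt
          omega
        exact ((pow_dvd_pow_of_dvd h1 j).trans (pow_dvd_pow P h2)).trans (dvd_mul_left _ _)
      · have hpn : p ∣ n := by
          obtain ⟨w, i, hw⟩ := hH a ha
          have h5 : (a.den : ℤ) ∣ (n : ℤ) ^ i := by
            have := Rat.den_dvd w ((n : ℤ) ^ i)
            rw [Rat.divInt_eq_div] at this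
            push_cast at this
            rwa [← hw] at this
          have h6 : a.den ∣ n ^ i := by exact_mod_cast h5
          exact hp.dvd_of_dvd_pow (((dvd_pow_self p hj0.ne').trans hj).trans h6)
        have hpf : p ∈ n.primeFactors := Nat.mem_primeFactors.mpr ⟨hp, hpn, by omega⟩
        have hjR : j ≤ R := by
          by_contra hcon
          exact hR p hpf hpU a ha ((pow_dvd_pow p (by omega)).trans hj)
        exact ((pow_dvd_pow_of_dvd hpn j).trans (pow_dvd_pow n hjR)).trans (dvd_mul_right _ _)
    obtain ⟨g, hg⟩ := hd
    have hgq : (n : ℚ) ^ R * (P : ℚ) ^ a.den = a.den * g := by exact_mod_cast hg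
    have hP0 : (P : ℚ) ≠ 0 := by positivity
    refine ⟨g * |a.num|, a.den, ?_⟩
    have hab : |a| * a.den = |(a.num : ℚ)| := by
      rw [← Rat.mul_den_eq_num a, abs_mul, Nat.abs_cast]
    push_cast
    rw [← hab]
    field_simp
    linear_combination |a| * hgq
  refine ⟨R, fun a ha => ?_⟩
  -- the sequence
  let f : {y // ZP P y} → {y // ZP P y} := fun y =>
    ⟨(ZP_div n hn P hP y.1 y.2).choose, (ZP_div n hn P hP y.1 y.2).choose_spec.1⟩
  have hf : ∀ y, ∃ j : ℤ, (n : ℚ) * (f y).1 = y.1 + j :=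
    fun y => (ZP_div n hn P hP y.1 y.2).choose_spec.2
  let Y : ℕ → {y // ZP P y} := fun i => f^[i] ⟨_, hZP a ha⟩
  have hY0 : (Y 0).1 = (n : ℚ) ^ R * |a| := rfl
  have hY : ∀ i, ∃ j : ℤ, (n : ℚ) * (Y (i + 1)).1 = (Y i).1 + j := by
    intro i
    have : Y (i + 1) = f (Y i) := Function.iterate_succ_apply' f i _
    rw [this]; exact hf _
  obtain ⟨s, m, hm⟩ : ∃ (s : ℕ) (m : ℤ), (n : ℚ) ^ s * ((n : ℚ) ^ R * a) = m := by
    obtain ⟨w, i, hw⟩ := hH a ha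
    refine ⟨i, n ^ R * w, ?_⟩
    rw [hw]; push_cast; field_simp
  have hz : ∀ i, ∃ z : ℤ, (z : ℚ) = (n : ℚ) ^ (s + i) * (Y i).1 := by
    intro i
    induction i with
    | zero =>
      refine ⟨|m|, ?_⟩
      rw [hY0]; push_cast; rw [← hm, abs_mul, abs_mul]; simp
    | succ i ih =>
      obtain ⟨z, hz⟩ := ih
      obtain ⟨j, hj⟩ := hY i
      refine ⟨z + n ^ (s + i) * j, ?_⟩
      push_cast
      rw [hz, ← add_assoc, pow_succ, mul_assoc, hj]; ring
  choose z hz using hz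
  have hstep : ∀ i, (n : ℤ) ^ (s + i) ∣ z (i + 1) - z i := by
    intro i
    obtain ⟨j, hj⟩ := hY i
    refine ⟨j, ?_⟩
    have : (z (i + 1) : ℚ) - z i = (n : ℚ) ^ (s + i) * j := by
      rw [hz, hz, ← add_assoc, pow_succ, mul_assoc, hj]; ring
    exact_mod_cast this
  have hcongr : ∀ i d, (n : ℤ) ^ (s + i) ∣ z (i + d) - z i := by
    intro i d
    induction d with
    | zero => simp
    | succ d ih =>
      have h1 := (pow_dvd_pow (n : ℤ) (by omega : s + i ≤ s + (i + d))).trans (hstep (i + d))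
      have := dvd_add h1 ih
      rwa [sub_add_sub_cancel] at this
  have hb : (fun l => (z l : ZMod (n ^ l))) ∈ LSet n Q := by
    refine ⟨?_, ?_⟩
    · intro i l hil
      simp only [map_intCast]
      have h1 := hcongr i (l - i)
      rw [Nat.add_sub_cancel' hil] at h1
      have h2 := (pow_dvd_pow (n : ℤ) (by omega : i ≤ s + i)).trans h1
      have h3 : (((n ^ i : ℕ) : ℤ)) ∣ z l - z i := by exact_mod_cast h2
      exact ((ZMod.intCast_eq_intCast_iff_dvd_sub _ _ _).mpr h3).symm
    · intro t _
      obtain ⟨q, hq, hq0, j, hj⟩ := hrep _ (ZP_smul n P s _ (Y t).2)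
      refine ⟨q, hq, hq0, ?_⟩
      simp only []
      rw [fract_aux n hn, hj, Int.fract_add_intCast, hz, pow_add]
      congr 1
      field_simp
  refine ⟨?_, s, ⟨m, hm⟩, _, hb, ?_⟩
  · refine ⟨m, s, ?_⟩
    rw [← hm]; field_simp
  · show _ = (((z s : ZMod (n ^ s)).val : ℕ) : ℚ) / (n : ℚ) ^ s
    rw [fract_aux n hn]
    obtain ⟨g, hg⟩ := hcongr 0 s
    have hgq : (z s : ℚ) = z 0 + (n : ℚ) ^ s * g := by
      have : z s = z 0 + (n : ℤ) ^ s * g := by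
        simp only [zero_add, add_zero] at hg
        linarith
      exact_mod_cast this
    have : (z s : ℚ) / (n : ℚ) ^ s = |(n : ℚ) ^ R * a| + g := by
      rw [hgq, hz, hY0, abs_mul, abs_of_nonneg (by positivity : (0 : ℚ) ≤ (n : ℚ) ^ R)]
      field_simp
      ring
    rw [this, Int.fract_add_intCast]
end

section
/- Fix an integer n ≥ 2 and let H = ℤ[1/n] with α(x) = n·x. For every ideal 𝔟 of the ring ℤ_n of n-adic integers, the set S(𝔟) ⊆ H is symmetric and confining for H under the action of α; moreover, condition (c) of the definition holds with k₀ = 0, i.e., S(𝔟) + S(𝔟) ⊆ S(𝔟). -/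
theorem znMem_intCast (n : ℕ) (c : ℤ) : ZnMem n (c : ∀ l : ℕ, ZMod (n ^ l)) := by
  intro k l h
  rw [Pi.intCast_apply, Pi.intCast_apply, map_intCast]

theorem intCast_mul_mem {n : ℕ} {I : Set (∀ l : ℕ, ZMod (n ^ l))} (hI : IsZnIdeal n I)
    (c : ℤ) {b : ∀ l : ℕ, ZMod (n ^ l)} (hb : b ∈ I) :
    (c : ∀ l : ℕ, ZMod (n ^ l)) * b ∈ I :=
  hI.2.2.2 _ (znMem_intCast n c) _ hb

theorem fract_iff {n : ℕ} (hn : 2 ≤ n) (s : ℕ) (x : ℚ) (m : ℤ)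
    (hm : (n : ℚ) ^ s * x = (m : ℚ)) (z : ZMod (n ^ s)) :
    Int.fract |x| = (z.val : ℚ) / (n : ℚ) ^ s ↔ ((m.natAbs : ℕ) : ZMod (n ^ s)) = z := by
  have hp : (0 : ℚ) < (n : ℚ) ^ s := by positivity
  have : NeZero (n ^ s) := ⟨by positivity⟩
  have hx : |x| = ((m.natAbs : ℕ) : ℚ) / ((n ^ s : ℕ) : ℚ) := by
    rw [Nat.cast_natAbs, Int.cast_abs, ← hm, abs_mul, abs_of_pos hp]
    push_cast
    field_simp
  rw [hx, Int.fract_div_natCast_eq_div_natCast_mod]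
  push_cast
  rw [div_left_inj' hp.ne', Nat.cast_inj, ← ZMod.val_natCast]
  exact (ZMod.val_injective _).eq_iff

theorem mem_SIdeal_iff {n : ℕ} (hn : 2 ≤ n) {I : Set (∀ l : ℕ, ZMod (n ^ l))}
    (hI : IsZnIdeal n I) (x : ℚ) :
    x ∈ SIdeal n I ↔ ∃ (s : ℕ) (m : ℤ), (n : ℚ) ^ s * x = (m : ℚ) ∧
      ∃ b ∈ I, (m : ZMod (n ^ s)) = b s := by
  have key : ∀ (s : ℕ) (m : ℤ), (∃ b ∈ I, ((m.natAbs : ℕ) : ZMod (n ^ s)) = b s) ↔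
      ∃ b ∈ I, (m : ZMod (n ^ s)) = b s := by
    intro s m
    have hneg : ∀ w : ZMod (n ^ s), (∃ b ∈ I, w = b s) → ∃ b ∈ I, -w = b s := by
      rintro w ⟨b, hb, rfl⟩
      exact ⟨_, intCast_mul_mem hI (-1) hb, by simp⟩
    have hc : ((m.natAbs : ℕ) : ZMod (n ^ s)) = ((m.natAbs : ℤ) : ZMod (n ^ s)) := by simp
    rw [hc]
    rcases Int.natAbs_eq m with h | h
    · rw [← h]
    · have h2 : (m : ZMod (n ^ s)) = -((m.natAbs : ℤ) : ZMod (n ^ s)) := by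
        conv_lhs => rw [h]
        push_cast
        rfl
      rw [h2]
      exact ⟨hneg _, fun h => by simpa using hneg _ h⟩
  constructor
  · rintro ⟨-, s, ⟨m, hm⟩, b, hb, h⟩
    exact ⟨s, m, hm, (key s m).1 ⟨b, hb, (fract_iff hn s x m hm _).1 h⟩⟩
  · rintro ⟨s, m, hm, h⟩
    obtain ⟨b, hb, h⟩ := (key s m).2 h
    refine ⟨⟨m, s, ?_⟩, s, ⟨m, hm⟩, b, hb, (fract_iff hn s x m hm _).2 h⟩
    have hp : (0 : ℚ) < (n : ℚ) ^ s := by positivity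
    rw [← hm]
    field_simp

theorem lift_level {n : ℕ} {I : Set (∀ l : ℕ, ZMod (n ^ l))}
    (hI : IsZnIdeal n I) (x : ℚ) (s d : ℕ) (m : ℤ) (hm : (n : ℚ) ^ s * x = (m : ℚ))
    (h : ∃ b ∈ I, (m : ZMod (n ^ s)) = b s) :
    (n : ℚ) ^ (s + d) * x = (((n : ℤ) ^ d * m : ℤ) : ℚ) ∧
      ∃ b ∈ I, (((n : ℤ) ^ d * m : ℤ) : ZMod (n ^ (s + d))) = b (s + d) := by
  refine ⟨by push_cast; rw [← hm]; ring, ?_⟩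
  obtain ⟨b, hb, h⟩ := h
  refine ⟨_, intCast_mul_mem hI ((n : ℤ) ^ d) hb, ?_⟩
  obtain ⟨c, hc⟩ := ZMod.intCast_surjective (b (s + d))
  have hz := hI.1 b hb s (s + d) (Nat.le_add_right _ _)
  rw [← hc, map_intCast, ← h, eq_comm, ZMod.intCast_eq_intCast_iff_dvd_sub] at hz
  rw [Pi.mul_apply, Pi.intCast_apply, ← hc, ← Int.cast_mul,
    ZMod.intCast_eq_intCast_iff_dvd_sub, ← mul_sub]
  push_cast at hz ⊢
  rw [pow_add, mul_comm]
  exact mul_dvd_mul_left _ hz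

/-- For every ideal `𝔟` of `ℤ_n`, the set `S(𝔟) ⊆ H = ℤ[1/n]` is symmetric and
confining for `H` under the action of `α : x ↦ n·x`; moreover condition (c) of the
definition of confining holds with `k₀ = 0`, i.e. `S(𝔟) + S(𝔟) ⊆ S(𝔟)`. -/
theorem SIdeal_confining (n : ℕ) (hn : 2 ≤ n) (I : Set (∀ l : ℕ, ZMod (n ^ l)))
    (hI : IsZnIdeal n I) :
    IsSymmSet (SIdeal n I) ∧ Confining n (SIdeal n I) ∧
      (∀ x ∈ SIdeal n I, ∀ y ∈ SIdeal n I, x + y ∈ SIdeal n I) := by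
  have hadd : ∀ x ∈ SIdeal n I, ∀ y ∈ SIdeal n I, x + y ∈ SIdeal n I := by
    intro x hx y hy
    rw [mem_SIdeal_iff hn hI] at hx hy ⊢
    obtain ⟨s, m, hm, h⟩ := hx
    obtain ⟨t, k, hk, h'⟩ := hy
    obtain ⟨h1, b, hb, h2⟩ := lift_level hI x s t m hm h
    obtain ⟨h3, c, hc, h4⟩ := lift_level hI y t s k hk h'
    rw [add_comm t s] at h3 h4
    refine ⟨s + t, (n : ℤ) ^ t * m + (n : ℤ) ^ s * k, ?_, b + c, hI.2.2.1 b hb c hc, ?_⟩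
    · rw [mul_add, h1, h3, Int.cast_add]
    · rw [Int.cast_add, h2, h4, Pi.add_apply]
  refine ⟨?_, ⟨fun x hx => hx.1, ?_, ?_, 0, ?_⟩, hadd⟩
  · intro x hx
    rw [mem_SIdeal_iff hn hI] at hx ⊢
    obtain ⟨s, m, hm, b, hb, h⟩ := hx
    exact ⟨s, -m, by push_cast; rw [← hm]; ring, _, intCast_mul_mem hI (-1) hb, by simp [h]⟩
  · intro x hx
    rw [mem_SIdeal_iff hn hI] at hx ⊢
    obtain ⟨s, m, hm, b, hb, h⟩ := hx
    exact ⟨s, n * m, by push_cast; rw [← hm]; ring, _, intCast_mul_mem hI n hb, by simp [h]⟩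
  · rintro x ⟨a, k, rfl⟩
    refine ⟨k, ?_⟩
    rw [mem_SIdeal_iff hn hI]
    have hp : (0 : ℚ) < (n : ℚ) ^ k := by positivity
    refine ⟨0, a, by field_simp, 0, hI.2.1, ?_⟩
    have : Subsingleton (ZMod (n ^ 0)) := by
      rw [pow_zero]; infer_instance
    exact Subsingleton.elim _ _
  · intro x hx y hy
    rw [pow_zero, one_mul]
    exact hadd x hx y hy
end

section
/- Fix an integer n ≥ 2 and let H = ℤ[1/n]. For every ideal 𝔞 of the ring ℤ_n of n-adic integers, the set S(𝔞) is an additive subgroup of H: it contains 0 and is closed under addition and negation. -/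
lemma aux_fract (n : ℕ) (hn : 2 ≤ n) (s : ℕ) (k : ℤ) (c : ZMod (n ^ s)) :
    Int.fract ((k : ℚ) / (n : ℚ) ^ s) = (c.val : ℚ) / (n : ℚ) ^ s ↔ c = (k : ZMod (n ^ s)) := by
  have hpos : 0 < n ^ s := by positivity
  have : NeZero (n ^ s) := ⟨hpos.ne'⟩
  have hq : ((n : ℚ) ^ s) ≠ 0 := by exact_mod_cast hpos.ne'
  have h1 : Int.fract ((k : ℚ) / (n : ℚ) ^ s) = ((k % ((n ^ s : ℕ) : ℤ) : ℤ) : ℚ) / (n : ℚ) ^ s := by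
    have := Int.fract_div_intCast_eq_div_intCast_mod (k := ℚ) (m := k) (n := n ^ s)
    rw [← Nat.cast_pow, this]
  rw [h1, div_left_inj' hq, ← ZMod.val_intCast]
  constructor
  · intro h
    have h2 : (k : ZMod (n ^ s)).val = c.val := by exact_mod_cast h
    exact (ZMod.val_injective _ h2).symm
  · rintro rfl
    simp

lemma aux_neg (n : ℕ) (I : Set (∀ l : ℕ, ZMod (n ^ l)))
    (hI : IsZnIdeal n I) (b) (hb : b ∈ I) : -b ∈ I := by
  have := hI.2.2.2 (-1) (by intro k l h; simp only [Pi.neg_apply, Pi.one_apply, map_neg, map_one]) b hb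
  simpa using this

lemma aux_char (n : ℕ) (hn : 2 ≤ n) (I : Set (∀ l : ℕ, ZMod (n ^ l)))
    (hI : IsZnIdeal n I) (x : ℚ) :
    x ∈ SIdeal n I ↔ ∃ (s : ℕ) (m : ℤ), x = (m : ℚ) / (n : ℚ) ^ s ∧
      ∃ b ∈ I, b s = (m : ZMod (n ^ s)) := by
  have hq : ∀ s : ℕ, (0 : ℚ) < (n : ℚ) ^ s := fun s => by positivity
  have habs : ∀ (s : ℕ) (m : ℤ), |(m : ℚ) / (n : ℚ) ^ s| = ((|m| : ℤ) : ℚ) / (n : ℚ) ^ s := by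
    intro s m
    rw [abs_div, abs_of_pos (hq s), Int.cast_abs]
  have hsign : ∀ (s : ℕ) (m m' : ℤ), (m' = m ∨ m' = -m) → (∃ b ∈ I, b s = (m : ZMod (n ^ s))) →
      ∃ b ∈ I, b s = (m' : ZMod (n ^ s)) := by
    rintro s m m' (rfl | rfl) ⟨b, hb, h⟩
    · exact ⟨b, hb, h⟩
    · exact ⟨-b, aux_neg n I hI b hb, by simp [h]⟩
  constructor
  · rintro ⟨-, s, ⟨m, hm⟩, b, hb, h⟩
    have hx : x = (m : ℚ) / (n : ℚ) ^ s := by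
      rw [eq_div_iff (hq s).ne', ← hm, mul_comm]
    refine ⟨s, m, hx, ?_⟩
    rw [hx, habs, aux_fract n hn] at h
    refine hsign s |m| m ?_ ⟨b, hb, h⟩
    rcases abs_choice m with h | h <;> rw [h] <;> simp
  · rintro ⟨s, m, hx, hb⟩
    refine ⟨⟨m, s, hx⟩, s, ⟨m, ?_⟩, ?_⟩
    · rw [hx, mul_div_cancel₀ _ (hq s).ne']
    · obtain ⟨b, hb, h⟩ := hsign s m |m| (abs_choice m) hb
      refine ⟨b, hb, ?_⟩
      rw [hx, habs, aux_fract n hn, h]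

lemma aux_lift (n : ℕ) (I : Set (∀ l : ℕ, ZMod (n ^ l)))
    (hI : IsZnIdeal n I) (s d : ℕ) (m : ℤ) (h : ∃ b ∈ I, b s = (m : ZMod (n ^ s))) :
    ∃ b ∈ I, b (s + d) = ((m * (n : ℤ) ^ d : ℤ) : ZMod (n ^ (s + d))) := by
  obtain ⟨b, hb, h⟩ := h
  refine ⟨(fun l => ((n ^ d : ℕ) : ZMod (n ^ l))) * b, hI.2.2.2 _ ?_ b hb, ?_⟩
  · intro k l h
    simp only [map_natCast]
  · have hc := hI.1 b hb s (s + d) (Nat.le_add_right _ _)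
    obtain ⟨z, hz⟩ := ZMod.intCast_surjective (b (s + d))
    rw [← hz, map_intCast, h, ZMod.intCast_eq_intCast_iff_dvd_sub] at hc
    obtain ⟨e, he⟩ := hc
    rw [Pi.mul_apply, ← hz, ← Int.cast_natCast, ← Int.cast_mul,
      ZMod.intCast_eq_intCast_iff_dvd_sub]
    refine ⟨e, ?_⟩
    push_cast at he ⊢
    rw [pow_add]
    linear_combination (n : ℤ) ^ d * he

/-- For every ideal `𝔞` of `ℤ_n`, the set `S(𝔞)` is an additive subgroup of
`H = ℤ[1/n]`: it contains `0` and is closed under addition and negation. -/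
theorem SIdeal_addSubgroup (n : ℕ) (hn : 2 ≤ n) (I : Set (∀ l : ℕ, ZMod (n ^ l)))
    (hI : IsZnIdeal n I) :
    (0 : ℚ) ∈ SIdeal n I ∧ (∀ x ∈ SIdeal n I, ∀ y ∈ SIdeal n I, x + y ∈ SIdeal n I) ∧
      (∀ x ∈ SIdeal n I, -x ∈ SIdeal n I) := by
  simp only [aux_char n hn I hI]
  have hn0 : (n : ℚ) ≠ 0 := by
    have : n ≠ 0 := by omega
    exact_mod_cast this
  refine ⟨⟨0, 0, by simp, 0, hI.2.1, Int.cast_zero.symm⟩, ?_, ?_⟩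
  · rintro x ⟨s, m, rfl, hb⟩ y ⟨t, k, rfl, hc⟩
    obtain ⟨b, hb, h1⟩ := aux_lift n I hI s t m hb
    have hc' := aux_lift n I hI t s k hc
    rw [add_comm t s] at hc'
    obtain ⟨c, hc, h2⟩ := hc'
    refine ⟨s + t, m * (n : ℤ) ^ t + k * (n : ℤ) ^ s, ?_, b + c, hI.2.2.1 b hb c hc, ?_⟩
    · push_cast
      rw [pow_add]
      field_simp
    · rw [Pi.add_apply, h1, h2, ← Int.cast_add]
  · rintro x ⟨s, m, rfl, b, hb, h⟩
    refine ⟨s, -m, by push_cast; ring, -b, aux_neg n I hI b hb, by simp [h]⟩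
end

section
/- Fix an integer n ≥ 2 and let H = ℤ[1/n]. If 𝔞 and 𝔟 are ideals of the ring ℤ_n of n-adic integers with 𝔞 ∼ 𝔟 (i.e., there exists k ≥ 0 with n^k·𝔞 ⊆ 𝔟 and n^k·𝔟 ⊆ 𝔞), then S(𝔞) = S(𝔟). -/
/-- The element `n` of `ℤ_n` (inside the ambient product ring). -/
def nElem (n : ℕ) : ∀ l : ℕ, ZMod (n ^ l) := fun l => (n : ZMod (n ^ l))

theorem val_shift (n : ℕ) (hn : 2 ≤ n) (b : ∀ l : ℕ, ZMod (n ^ l)) (hb : ZnMem n b) (s k : ℕ) :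
    ((nElem n ^ k * b) (s + k)).val = n ^ k * (b s).val := by
  have : NeZero n := ⟨by omega⟩
  have h1 := hb s (s + k) (Nat.le_add_right s k)
  have h2 : (b s).val = (b (s + k)).val % n ^ s := by
    rw [← h1, ZMod.castHom_apply, ZMod.cast_eq_val, ZMod.val_natCast]
  have h3 : (nElem n ^ k * b) (s + k) = ((n ^ k * (b (s + k)).val : ℕ) : ZMod (n ^ (s + k))) := by
    simp [nElem]
  rw [h3, ZMod.val_natCast, h2]
  generalize (b (s + k)).val = c
  rw [pow_add, mul_comm (n ^ s), Nat.mul_mod_mul_left]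

theorem SIdeal_subset (n : ℕ) (hn : 2 ≤ n) (I J : Set (∀ l : ℕ, ZMod (n ^ l)))
    (hI : IsZnIdeal n I) (k : ℕ) (h : ∀ x ∈ I, nElem n ^ k * x ∈ J) :
    SIdeal n I ⊆ SIdeal n J := by
  rintro x ⟨hx, s, ⟨m, hm⟩, b, hb, hf⟩
  have hn0 : (n : ℚ) ≠ 0 := by
    have : n ≠ 0 := by omega
    exact_mod_cast this
  refine ⟨hx, s + k, ⟨n ^ k * m, ?_⟩, _, h b hb, ?_⟩
  · push_cast
    rw [← hm]
    ring
  · rw [val_shift n hn b (hI.1 b hb), hf]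
    push_cast
    field_simp
    try ring

/-- If `𝔞 ∼ 𝔟` are equivalent ideals of `ℤ_n` (there exists `k ≥ 0` with
`n^k·𝔞 ⊆ 𝔟` and `n^k·𝔟 ⊆ 𝔞`), then `S(𝔞) = S(𝔟)`. -/
theorem SIdeal_eq_of_equiv (n : ℕ) (hn : 2 ≤ n) (I J : Set (∀ l : ℕ, ZMod (n ^ l)))
    (hI : IsZnIdeal n I) (hJ : IsZnIdeal n J)
    (hIJ : ∃ k : ℕ, (∀ x ∈ I, nElem n ^ k * x ∈ J) ∧ (∀ x ∈ J, nElem n ^ k * x ∈ I)) :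
    SIdeal n I = SIdeal n J := by
  obtain ⟨k, h1, h2⟩ := hIJ
  exact Set.Subset.antisymm (SIdeal_subset n hn I J hI k h1) (SIdeal_subset n hn J I hJ k h2)
end

section
/- Fix an integer n ≥ 2 with prime factorization n = p_1^{n_1}···p_k^{n_k}. For every ideal 𝔞 of the ring ℤ_n of n-adic integers there exists a unique subset A ⊆ {1,…,k} such that 𝔞 ∼ I_A, where I_A is the full ideal associated to A. In particular, every equivalence class of ideals of ℤ_n under ∼ contains exactly one full ideal. -/
/-- `𝔞 ≤ 𝔟` for ideals of `ℤ_n`: `n^k·𝔞 ⊆ 𝔟` for some `k ≥ 0`. -/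
def IdealLe (n : ℕ) (I J : Set (∀ l : ℕ, ZMod (n ^ l))) : Prop :=
  ∃ k : ℕ, ∀ x ∈ I, nElem n ^ k * x ∈ J

/-- `𝔞 ∼ 𝔟` for ideals of `ℤ_n`: `𝔞 ≤ 𝔟` and `𝔟 ≤ 𝔞`. -/
def IdealEquiv (n : ℕ) (I J : Set (∀ l : ℕ, ZMod (n ^ l))) : Prop :=
  IdealLe n I J ∧ IdealLe n J I

/-- The full ideal `I_A` of `ℤ_n` associated to a set `A` of indices of prime factors
`p i` (with multiplicities `e i`) of `n`: the elements `x ∈ ℤ_n` such that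
`p_i^{e_i·l}` divides `v_l(x)` for every `i ∈ A` and every `l ≥ 1`. -/
def FullIdeal (n : ℕ) {k : ℕ} (p e : Fin k → ℕ) (A : Set (Fin k)) :
    Set (∀ l : ℕ, ZMod (n ^ l)) :=
  {x | ZnMem n x ∧ ∀ i ∈ A, ∀ l : ℕ, 1 ≤ l → (p i) ^ (e i * l) ∣ (x l).val}

/-- `ℤ_n` as a subring of the product ring. -/
def ZnSub (n : ℕ) : Subring (∀ l : ℕ, ZMod (n ^ l)) where
  carrier := {x | ZnMem n x}
  mul_mem' := by
    intro a b ha hb k l h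
    simp only [Pi.mul_apply, map_mul, ha k l h, hb k l h]
  one_mem' := by
    intro k l h
    simp only [Pi.one_apply, map_one]
  add_mem' := by
    intro a b ha hb k l h
    simp only [Pi.add_apply, map_add, ha k l h, hb k l h]
  zero_mem' := by
    intro k l h
    simp only [Pi.zero_apply, map_zero]
  neg_mem' := by
    intro a ha k l h
    simp only [Pi.neg_apply, map_neg, ha k l h]

/-- Component at level `m` modulo `p ^ m`. -/
def compAt (n p : ℕ) (h : p ∣ n) (m : ℕ) : ZnSub n →+* ZMod (p ^ m) :=
  ((ZMod.castHom (pow_dvd_pow_of_dvd h m) (ZMod (p ^ m))).comp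
    (Pi.evalRingHom (fun l : ℕ => ZMod (n ^ l)) m)).comp (ZnSub n).subtype

theorem compAt_compat (n p : ℕ) (h : p ∣ n) (k1 k2 : ℕ) (hk : k1 ≤ k2) :
    (ZMod.castHom (pow_dvd_pow p hk) (ZMod (p ^ k1))).comp (compAt n p h k2)
      = compAt n p h k1 := by
  ext x
  have hx := x.2 k1 k2 hk
  simp only [compAt, RingHom.comp_apply, Pi.evalRingHom_apply, Subring.subtype_apply]
  rw [← hx]
  simp only [← RingHom.comp_apply]
  congr 1
  exact Subsingleton.elim _ _

/-- Projection to the `p`-adic integers. -/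
noncomputable def toPadic (n p : ℕ) [Fact p.Prime] (h : p ∣ n) : ZnSub n →+* ℤ_[p] :=
  PadicInt.lift (f := compAt n p h) (compAt_compat n p h)

theorem toZModPow_toPadic (n p : ℕ) [Fact p.Prime] (h : p ∣ n) (m : ℕ) (x : ZnSub n) :
    PadicInt.toZModPow m (toPadic n p h x) = compAt n p h m x := by
  rw [← PadicInt.lift_spec (f := compAt n p h) (compAt_compat n p h) m]
  rfl

/-- the residue of `x_l` modulo `p^(e*l)` -/
theorem toZModPow_toPadic' (n p e : ℕ) [Fact p.Prime] (h : p ∣ n) (he : 1 ≤ e)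
    (hpe : p ^ e ∣ n) (l : ℕ) (x : ZnSub n) (hd : p ^ (e * l) ∣ n ^ l) :
    PadicInt.toZModPow (e * l) (toPadic n p h x)
      = ZMod.castHom hd (ZMod (p ^ (e * l))) (x.1 l) := by
  rw [toZModPow_toPadic, ← x.2 l (e * l) (Nat.le_mul_of_pos_left l he)]
  simp only [compAt, RingHom.comp_apply, Pi.evalRingHom_apply, Subring.subtype_apply]
  simp only [← RingHom.comp_apply]
  congr 1
  exact Subsingleton.elim _ _

theorem pe_dvd (n p e : ℕ) (hpe : p ^ e ∣ n) (l : ℕ) : p ^ (e * l) ∣ n ^ l := by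
  rw [pow_mul]; exact pow_dvd_pow_of_dvd hpe l

theorem vanish_iff (n p e : ℕ) (hn : 2 ≤ n) [Fact p.Prime] (h : p ∣ n) (he : 1 ≤ e)
    (hpe : p ^ e ∣ n) (x : ZnSub n) :
    toPadic n p h x = 0 ↔ ∀ l : ℕ, 1 ≤ l → p ^ (e * l) ∣ (x.1 l).val := by
  have key : ∀ l, p ^ (e * l) ∣ (x.1 l).val ↔
      PadicInt.toZModPow (e * l) (toPadic n p h x) = 0 := by
    intro l
    have : NeZero (n ^ l) := ⟨pow_ne_zero _ (by omega)⟩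
    rw [toZModPow_toPadic' n p e h he hpe l x (pe_dvd n p e hpe l),
      ← ZMod.natCast_eq_zero_iff, ZMod.castHom_apply, ZMod.natCast_val]
  constructor
  · intro h0 l _
    rw [key, h0, map_zero]
  · intro hl
    apply PadicInt.ext_of_toZModPow.mp
    intro m
    rw [map_zero]
    rcases Nat.eq_zero_or_pos m with rfl | hm
    · have : Subsingleton (ZMod (p ^ 0)) := by rw [pow_zero]; infer_instance
      exact Subsingleton.elim _ _
    · have h1 := (key m).mp (hl m hm)
      have h2 := PadicInt.zmod_cast_comp_toZModPow (p := p) m (e * m) (Nat.le_mul_of_pos_left m he)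
      rw [← h2, RingHom.comp_apply, h1, map_zero]

theorem hpe_dvd (n : ℕ) (k : ℕ) (p e : Fin k → ℕ)
    (hfact : n = ∏ i, p i ^ e i) (i : Fin k) : p i ^ e i ∣ n := by
  rw [hfact]; exact Finset.dvd_prod_of_mem (fun i => p i ^ e i) (Finset.mem_univ i)

theorem hp_dvd (n : ℕ) (k : ℕ) (p e : Fin k → ℕ) (he : ∀ i, 1 ≤ e i)
    (hfact : n = ∏ i, p i ^ e i) (i : Fin k) : p i ∣ n :=
  (dvd_pow_self _ (by have := he i; omega)).trans (hpe_dvd n k p e hfact i)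

theorem cop (k : ℕ) (p e : Fin k → ℕ) [hp : ∀ i, Fact (p i).Prime]
    (hinj : Function.Injective p) (l : ℕ) : Pairwise (Function.onFun Nat.Coprime (fun i => p i ^ (e i * l))) := by
  intro i j hij
  exact Nat.Coprime.pow _ _ ((Nat.coprime_primes (hp i).out (hp j).out).mpr (fun h => hij (hinj h)))

theorem npow_eq (n : ℕ) (k : ℕ) (p e : Fin k → ℕ)
    (hfact : n = ∏ i, p i ^ e i) (l : ℕ) : n ^ l = ∏ i, p i ^ (e i * l) := by
  conv_lhs => rw [hfact]
  rw [← Finset.prod_pow]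
  simp only [pow_mul]

theorem zmod_ext (n : ℕ) (k : ℕ) (p e : Fin k → ℕ) [hp : ∀ i, Fact (p i).Prime] (hinj : Function.Injective p)
    (hfact : n = ∏ i, p i ^ e i) (l : ℕ) (a b : ZMod (n ^ l))
    (h : ∀ i, ZMod.castHom (pe_dvd n _ _ (hpe_dvd n k p e hfact i) l) (ZMod (p i ^ (e i * l))) a
      = ZMod.castHom (pe_dvd n _ _ (hpe_dvd n k p e hfact i) l) (ZMod (p i ^ (e i * l))) b) :
    a = b := by
  obtain ⟨a, rfl⟩ := ZMod.intCast_surjective a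
  obtain ⟨b, rfl⟩ := ZMod.intCast_surjective b
  simp only [map_intCast] at h
  rw [ZMod.intCast_eq_intCast_iff_dvd_sub, npow_eq n k p e hfact l]
  push_cast
  apply Finset.prod_dvd_of_coprime
  · intro i _ j _ hij
    have := cop k p e hinj l hij
    have h2 := Nat.isCoprime_iff_coprime.mpr this
    simpa [Function.onFun] using h2
  · intro i _
    have := (ZMod.intCast_eq_intCast_iff_dvd_sub _ _ _).mp (h i)
    simpa using this

theorem padic_ext (n : ℕ) (k : ℕ) (p e : Fin k → ℕ) [hp : ∀ i, Fact (p i).Prime] (he : ∀ i, 1 ≤ e i) (hinj : Function.Injective p)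
    (hfact : n = ∏ i, p i ^ e i) (x : ZnSub n)
    (h : ∀ i, toPadic n (p i) (hp_dvd n k p e he hfact i) x = 0) : x = 0 := by
  apply Subtype.ext
  funext l
  apply zmod_ext n k p e hinj hfact
  intro i
  rw [← toZModPow_toPadic' n (p i) (e i) (hp_dvd n k p e he hfact i) (he i)
    (hpe_dvd n k p e hfact i), h i]
  simp

theorem padic_surj (n : ℕ) (k : ℕ) (p e : Fin k → ℕ) [hp : ∀ i, Fact (p i).Prime] (he : ∀ i, 1 ≤ e i) (hinj : Function.Injective p)
    (hfact : n = ∏ i, p i ^ e i) (y : ∀ i, ℤ_[p i]) :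
    ∃ x : ZnSub n, ∀ i, toPadic n (p i) (hp_dvd n k p e he hfact i) x = y i := by
  have hex : ∀ l : ℕ, ∃ a : ZMod (n ^ l), ∀ i,
      ZMod.castHom (pe_dvd n _ _ (hpe_dvd n k p e hfact i) l) (ZMod (p i ^ (e i * l))) a
        = PadicInt.toZModPow (e i * l) (y i) := by
    intro l
    let c := Nat.chineseRemainderOfFinset
      (fun i => (PadicInt.toZModPow (e i * l) (y i)).val) (fun i => p i ^ (e i * l))
      Finset.univ (fun i _ => pow_ne_zero _ (hp i).out.ne_zero)
      (fun i _ j _ hij => cop k p e hinj l hij)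
    refine ⟨((c : ℕ) : ZMod (n ^ l)), fun i => ?_⟩
    have hc := c.2 i (Finset.mem_univ i)
    rw [map_natCast]
    have : NeZero (p i ^ (e i * l)) := ⟨pow_ne_zero _ (hp i).out.ne_zero⟩
    rw [(ZMod.natCast_eq_natCast_iff _ _ _).mpr hc, ZMod.natCast_zmod_val]
  choose a ha using hex
  have hmem : ZnMem n a := by
    intro m l hml
    apply zmod_ext n k p e hinj hfact
    intro i
    have hle : e i * m ≤ e i * l := Nat.mul_le_mul_left _ hml
    rw [ha m i, ← PadicInt.zmod_cast_comp_toZModPow (p := p i) _ _ hle, RingHom.comp_apply,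
      ← ha l i]
    simp only [← RingHom.comp_apply]
    congr 1
    exact Subsingleton.elim _ _
  refine ⟨⟨a, hmem⟩, fun i => ?_⟩
  apply PadicInt.ext_of_toZModPow.mp
  intro m
  have hle := Nat.le_mul_of_pos_left m (he i)
  rw [← PadicInt.zmod_cast_comp_toZModPow (p := p i) m _ hle, RingHom.comp_apply,
    RingHom.comp_apply, ← ha m i, toZModPow_toPadic' n (p i) (e i) _ (he i)
    (hpe_dvd n k p e hfact i) m _ (pe_dvd n _ _ (hpe_dvd n k p e hfact i) m)]

theorem exists_dvd_npow (n p : ℕ) [Fact p.Prime] (h : p ∣ n) (x : ℤ_[p]) (hx : x ≠ 0) :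
    ∃ v : ℕ, x ∣ (n : ℤ_[p]) ^ v := by
  refine ⟨x.valuation, ?_⟩
  have h1 : x ∣ (p : ℤ_[p]) ^ x.valuation := by
    conv_lhs => rw [PadicInt.unitCoeff_spec hx]
    exact (Units.mul_left_dvd).mpr dvd_rfl
  refine h1.trans (pow_dvd_pow_of_dvd ?_ _)
  exact_mod_cast Nat.cast_dvd_cast h

/-- Let `n = p_1^{n_1}⋯p_k^{n_k}` be the prime factorization of `n ≥ 2`. Every ideal
`𝔞` of `ℤ_n` is equivalent to a unique full ideal: there is a unique `A ⊆ {1,…,k}`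
with `𝔞 ∼ I_A`. -/
theorem exists_unique_full_ideal (n : ℕ) (hn : 2 ≤ n) (k : ℕ) (p e : Fin k → ℕ)
    (hp : ∀ i, (p i).Prime) (he : ∀ i, 1 ≤ e i) (hinj : Function.Injective p)
    (hfact : n = ∏ i, p i ^ e i)
    (I : Set (∀ l : ℕ, ZMod (n ^ l))) (hI : IsZnIdeal n I) :
    ∃! A : Set (Fin k), IdealEquiv n I (FullIdeal n p e A) := by
  have : ∀ i, Fact (p i).Prime := fun i => ⟨hp i⟩
  let π : ∀ i, ZnSub n →+* ℤ_[p i] := fun i => toPadic n (p i) (hp_dvd n k p e he hfact i)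
  have F1 : ∀ x : ZnSub n, (∀ i, π i x = 0) → x = 0 := padic_ext n k p e he hinj hfact
  have F2 : ∀ y : ∀ i, ℤ_[p i], ∃ x : ZnSub n, ∀ i, π i x = y i :=
    padic_surj n k p e he hinj hfact
  have F3 : ∀ (A : Set (Fin k)) (x : ZnSub n), x.1 ∈ FullIdeal n p e A ↔ ∀ i ∈ A, π i x = 0 := by
    intro A x
    constructor
    · intro hx i hi
      exact (vanish_iff n (p i) (e i) hn _ (he i) (hpe_dvd n k p e hfact i) x).mpr (hx.2 i hi)
    · intro hx
      exact ⟨x.2, fun i hi =>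
        (vanish_iff n (p i) (e i) hn _ (he i) (hpe_dvd n k p e hfact i) x).mp (hx i hi)⟩
  obtain ⟨hI1, hI0, hIadd, hImul⟩ := hI
  let J : Ideal (ZnSub n) :=
    { carrier := {x | x.1 ∈ I}
      zero_mem' := hI0
      add_mem' := fun {a b} ha hb => hIadd _ ha _ hb
      smul_mem' := fun c x hx => hImul _ c.2 _ hx }
  have hJ : ∀ x : ZnSub n, x ∈ J ↔ x.1 ∈ I := fun x => Iff.rfl
  have hnE : ∀ (m : ℕ) (x : ZnSub n), nElem n ^ m * x.1 = ((n : ZnSub n) ^ m * x).1 := by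
    intro m x
    rfl
  have hπn : ∀ i (m : ℕ) (x : ZnSub n), π i ((n : ZnSub n) ^ m * x) = (n : ℤ_[p i]) ^ m * π i x := by
    intro i m x
    rw [map_mul, map_pow, map_natCast]
  have hn0 : ∀ i (m : ℕ), (n : ℤ_[p i]) ^ m ≠ 0 := by
    intro i m
    exact pow_ne_zero _ (Nat.cast_ne_zero.mpr (by omega))
  refine ⟨{i | ∀ x ∈ J, π i x = 0}, ⟨⟨0, ?_⟩, ?_⟩, ?_⟩
  · intro x hx
    rw [pow_zero, one_mul]
    exact (F3 _ ⟨x, hI1 x hx⟩).mpr (fun i hi => hi ⟨x, hI1 x hx⟩ hx)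
  · have h1 : ∀ i, ∃ x ∈ J, ∃ v : ℕ, (¬ (∀ x ∈ J, π i x = 0)) → π i x ∣ (n : ℤ_[p i]) ^ v := by
      intro i
      by_cases hi : ∀ x ∈ J, π i x = 0
      · exact ⟨0, J.zero_mem, 0, fun h => absurd hi h⟩
      · have hi' := hi
        push Not at hi'
        obtain ⟨x, hxJ, hx⟩ := hi'
        obtain ⟨v, hv⟩ := exists_dvd_npow n (p i) (hp_dvd n k p e he hfact i) _ hx
        exact ⟨x, hxJ, v, fun _ => hv⟩
    choose x hxJ v hv using h1
    refine ⟨∑ i, v i, ?_⟩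
    intro y0 hy
    obtain ⟨y, rfl⟩ : ∃ y : ZnSub n, y.1 = y0 := ⟨⟨y0, hy.1⟩, rfl⟩
    rw [F3] at hy
    rw [hnE, ← hJ]
    have h2 : ∀ i, ∃ c : ℤ_[p i], (n : ℤ_[p i]) ^ (∑ i, v i) * π i y = c * π i (x i) := by
      intro i
      by_cases hi : ∀ x ∈ J, π i x = 0
      · exact ⟨0, by rw [hy i hi]; ring⟩
      · have h3 : π i (x i) ∣ (n : ℤ_[p i]) ^ (∑ i, v i) :=
          (hv i hi).trans (pow_dvd_pow _
            (Finset.single_le_sum (fun j _ => Nat.zero_le (v j)) (Finset.mem_univ i)))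
        obtain ⟨c, hc⟩ := h3
        exact ⟨c * π i y, by rw [hc]; ring⟩
    choose c hc using h2
    have h4 : ∀ i, ∃ s : ZnSub n, ∀ j, π j s = Pi.single (M := fun i => ℤ_[p i]) i (c i) j :=
      fun i => F2 _
    choose s hs using h4
    have h5 : (n : ZnSub n) ^ (∑ i, v i) * y = ∑ i, s i * x i := by
      rw [← sub_eq_zero]
      apply F1
      intro j
      rw [map_sub, hπn, hc, map_sum, Finset.sum_eq_single j]
      · rw [map_mul, hs, Pi.single_eq_same, sub_self]
      · intro i _ hij
        rw [map_mul, hs, Pi.single_eq_of_ne hij.symm, zero_mul]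
      · intro h; exact absurd (Finset.mem_univ j) h
    rw [h5]
    exact J.sum_mem (fun i _ => J.mul_mem_left _ (hxJ i))
  · rintro B ⟨⟨m, hm⟩, ⟨m', hm'⟩⟩
    ext i
    constructor
    · intro hi x hx
      have h1 := hm x.1 hx
      rw [hnE, F3] at h1
      have h2 := h1 i hi
      rw [hπn] at h2
      exact (mul_eq_zero.mp h2).resolve_left (hn0 i m)
    · intro hi
      by_contra hB
      obtain ⟨x, hx⟩ := F2 (Pi.single i 1)
      have h1 : x.1 ∈ FullIdeal n p e B := by
        rw [F3]
        intro j hj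
        rw [hx, Pi.single_eq_of_ne]
        rintro rfl
        exact hB hj
      have h2 := hm' _ h1
      rw [hnE, ← hJ] at h2
      have h3 := hi _ h2
      rw [hπn, hx, Pi.single_eq_same, mul_one] at h3
      exact hn0 i m' h3
end

section
/- Fix an integer n ≥ 2 and let H = ℤ[1/n]. If Q ⊆ H is a symmetric subset confining for H under the action of α⁻¹ (where α⁻¹(x) = x/n), then there exists k ≥ 0 such that x/n^k ∈ Q for every x ∈ H with |x| < 1 (that is, α^{-k}(Q⁻) ⊆ Q where Q⁻ = {x ∈ H : |x| < 1}). -/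
/-- If `Q ⊆ H = ℤ[1/n]` is a symmetric confining subset under `α⁻¹ : x ↦ x/n`, then
`α^{-k}(Q⁻) ⊆ Q` for some `k ≥ 0`, where `Q⁻ = {x ∈ H : |x| < 1}`. -/
theorem Qminus_iterate_subset (n : ℕ) (hn : 2 ≤ n) (Q : Set ℚ)
    (hQsymm : IsSymmSet Q) (hQconf : ConfiningInv n Q) :
    ∃ k : ℕ, ∀ x : ℚ, inH n x → |x| < 1 → x / (n : ℚ) ^ k ∈ Q := by
  obtain ⟨-, hdiv, habs, k₀, hadd⟩ := hQconf
  have hn0 : (n : ℚ) ≠ 0 := by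
    have : n ≠ 0 := by omega
    exact_mod_cast this
  have hdivs : ∀ (j : ℕ) (x : ℚ), x ∈ Q → x / (n : ℚ) ^ j ∈ Q := by
    intro j
    induction j with
    | zero => intro x hx; simpa using hx
    | succ j ih =>
      intro x hx
      have h := hdiv _ (ih x hx)
      rwa [div_div, ← pow_succ] at h
  have hmono : ∀ (x : ℚ) (i j : ℕ), i ≤ j → x / (n : ℚ) ^ i ∈ Q → x / (n : ℚ) ^ j ∈ Q := by
    intro x i j hij hx
    obtain ⟨l, rfl⟩ := Nat.exists_eq_add_of_le hij
    have h := hdivs l _ hx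
    rwa [div_div, ← pow_add] at h
  have hfin : ∀ B : ℕ, ∃ K : ℕ, ∀ d : ℕ, d < B → (d : ℚ) / (n : ℚ) ^ K ∈ Q := by
    intro B
    induction B with
    | zero => exact ⟨0, fun d hd => absurd hd (Nat.not_lt_zero d)⟩
    | succ B ih =>
      obtain ⟨K, hK⟩ := ih
      obtain ⟨L, hL⟩ := habs (B : ℚ) ⟨B, 0, by simp⟩
      refine ⟨max K L, fun d hd => ?_⟩
      rcases Nat.lt_succ_iff_lt_or_eq.mp hd with h | h
      · exact hmono _ K _ (le_max_left _ _) (hK d h)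
      · subst h
        exact hmono _ L _ (le_max_right _ _) hL
  obtain ⟨N, hN⟩ : ∃ N : ℕ, N = n ^ (k₀ + 1) := ⟨_, rfl⟩
  have hNpos : 0 < N := by rw [hN]; exact Nat.pow_pos (by omega)
  have hNq : (N : ℚ) = (n : ℚ) ^ (k₀ + 1) := by rw [hN]; push_cast; rfl
  have hN0 : (N : ℚ) ≠ 0 := by exact_mod_cast hNpos.ne'
  obtain ⟨K, hK⟩ := hfin N
  have hmain : ∀ m a : ℕ, a < N ^ m → (a : ℚ) / (N : ℚ) ^ m / (n : ℚ) ^ K ∈ Q := by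
    intro m
    induction m with
    | zero =>
      intro a ha
      have h0 : a = 0 := by simpa using ha
      subst h0
      simpa using hK 0 hNpos
    | succ m ih =>
      intro a ha
      have hd : a / N ^ m < N := by
        apply Nat.div_lt_of_lt_mul
        rwa [pow_succ] at ha
      have hr : a % N ^ m < N ^ m := Nat.mod_lt _ (Nat.pow_pos hNpos)
      have h := hdiv _ (hadd _ (hK _ hd) _ (ih _ hr))
      have ha' : (a : ℚ) = (N : ℚ) ^ m * ((a / N ^ m : ℕ) : ℚ) + ((a % N ^ m : ℕ) : ℚ) := by
        exact_mod_cast (Nat.div_add_mod a (N ^ m)).symm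
      generalize ((a / N ^ m : ℕ) : ℚ) = d at h ha'
      generalize ((a % N ^ m : ℕ) : ℚ) = r at h ha'
      rw [div_div _ _ (n : ℚ), ← pow_succ, ← hNq] at h
      convert h using 1
      rw [ha', pow_succ]
      field_simp
  have hpos : ∀ (a k : ℕ), a < n ^ k → (a : ℚ) / (n : ℚ) ^ k / (n : ℚ) ^ K ∈ Q := by
    intro a k hak
    have h := hmain k (a * n ^ (k₀ * k)) (by
      rw [hN, ← pow_mul, add_mul, one_mul, pow_add, mul_comm]
      exact Nat.mul_lt_mul_of_pos_left hak (Nat.pow_pos (by omega)))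
    convert h using 2
    rw [hNq, ← pow_mul, add_mul, one_mul, pow_add]
    push_cast
    field_simp
  refine ⟨K, ?_⟩
  rintro x ⟨a, k, rfl⟩ hx
  have hnk : (0 : ℚ) < (n : ℚ) ^ k := by positivity
  rw [abs_div, abs_of_pos hnk, div_lt_one hnk] at hx
  have hlt : a.natAbs < n ^ k := by
    have h1 : ((a.natAbs : ℕ) : ℚ) = |(a : ℚ)| := by simp [Nat.cast_natAbs]
    rw [← h1] at hx
    exact_mod_cast hx
  have h := hpos _ _ hlt
  have e := Int.natAbs_eq a
  generalize a.natAbs = b at h hlt e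
  rcases e with e | e
  · rw [e, Int.cast_natCast]; exact h
  · have h2 := hQsymm _ h
    rw [e, Int.cast_neg, Int.cast_natCast, neg_div, neg_div]
    exact h2
end

section
/- Fix an integer n ≥ 2 and let H = ℤ[1/n]. Suppose Q ⊆ H is a symmetric subset confining for H under the action of α⁻¹ (where α⁻¹(x) = x/n), that Q contains every x ∈ H with |x| < 1, and that Q is unbounded in the sense that for every k ≥ 0 there exists x ∈ Q with |x| ≥ n^k. Then Q = H. -/
theorem inH_sub {n : ℕ} (hn : 2 ≤ n) {x y : ℚ} (hx : inH n x) (hy : inH n y) :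
    inH n (x - y) := by
  obtain ⟨a, k, rfl⟩ := hx
  obtain ⟨b, l, rfl⟩ := hy
  have h0 : (n : ℚ) ≠ 0 := by
    have : n ≠ 0 := by omega
    exact_mod_cast this
  refine ⟨a * n ^ l - b * n ^ k, k + l, ?_⟩
  push_cast
  rw [pow_add]
  field_simp

theorem inH_mul_pow {n : ℕ} {x : ℚ} (hx : inH n x) (j : ℕ) :
    inH n (x * (n : ℚ) ^ j) := by
  obtain ⟨a, k, rfl⟩ := hx
  refine ⟨a * n ^ j, k, ?_⟩
  push_cast
  ring

theorem div_pow_mem {n : ℕ} {Q : Set ℚ} (ha : ∀ x ∈ Q, x / (n : ℚ) ∈ Q) {x : ℚ}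
    (hx : x ∈ Q) (j : ℕ) : x / (n : ℚ) ^ j ∈ Q := by
  induction j with
  | zero => simpa using hx
  | succ j ih =>
    have := ha _ ih
    rwa [div_div, ← pow_succ] at this

theorem nsmul_mem_aux {n : ℕ} (hn : 2 ≤ n) {Q : Set ℚ} (ha : ∀ x ∈ Q, x / (n : ℚ) ∈ Q)
    (h0 : (0 : ℚ) ∈ Q) {k₀ : ℕ} (hc : ∀ x ∈ Q, ∀ y ∈ Q, (x + y) / (n : ℚ) ^ k₀ ∈ Q)
    (m : ℕ) : ∀ p : ℚ, p * (n : ℚ) ^ (m * k₀) ∈ Q → (m : ℚ) * p ∈ Q := by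
  have hn0 : (n : ℚ) ≠ 0 := by
    have : n ≠ 0 := by omega
    exact_mod_cast this
  induction m with
  | zero => intro p _; simpa using h0
  | succ m ih =>
    intro p hp
    have e : p * (n : ℚ) ^ ((m + 1) * k₀) = (p * (n : ℚ) ^ k₀) * (n : ℚ) ^ (m * k₀) := by
      rw [Nat.succ_mul, pow_add]; ring
    rw [e] at hp
    have h1 := ih _ hp
    have h2 : p * (n : ℚ) ^ k₀ ∈ Q := by
      have := div_pow_mem ha hp (m * k₀)
      rwa [mul_div_cancel_right₀ _ (pow_ne_zero _ hn0)] at this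
    have h3 := hc _ h1 _ h2
    convert h3 using 1
    push_cast
    field_simp

theorem nonneg_mem_aux (n : ℕ) (hn : 2 ≤ n) (Q : Set ℚ)
    (hQsymm : IsSymmSet Q) (hQconf : ConfiningInv n Q)
    (hQminus : ∀ x : ℚ, inH n x → |x| < 1 → x ∈ Q)
    (hunb : ∀ k : ℕ, ∃ x ∈ Q, (n : ℚ) ^ k ≤ |x|) (h : ℚ) (hh : inH n h) (hpos : 0 ≤ h) :
    h ∈ Q := by
  obtain ⟨hH, ha, -, k₀, hc⟩ := hQconf
  have hn1 : (1 : ℚ) < n := by exact_mod_cast (by omega : 1 < n)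
  have hn0 : (0 : ℚ) < n := by linarith
  have h0 : (0 : ℚ) ∈ Q := hQminus 0 ⟨0, 0, by simp⟩ (by simp)
  set t := h * (n : ℚ) ^ k₀ with ht
  have htH : inH n t := inH_mul_pow hh k₀
  have ht0 : 0 ≤ t := by positivity
  obtain ⟨M, hM⟩ := exists_nat_ge (t * n)
  obtain ⟨x, hx, hxM⟩ : ∃ x ∈ Q, (n : ℚ) ^ (M * k₀) ≤ x := by
    obtain ⟨x, hx, hxM⟩ := hunb (M * k₀)
    rcases abs_choice x with h | h
    · exact ⟨x, hx, h ▸ hxM⟩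
    · exact ⟨-x, hQsymm x hx, h ▸ hxM⟩
  have hx1 : 1 ≤ x := (one_le_pow₀ hn1.le).trans hxM
  obtain ⟨k, hk1, hk2⟩ := exists_nat_pow_near hx1 hn1
  have hkM : M * k₀ < k + 1 := (pow_lt_pow_iff_right₀ hn1).1 (hxM.trans_lt hk2)
  set p := x / (n : ℚ) ^ (k + 1) with hp
  have hpk : (0 : ℚ) < (n : ℚ) ^ (k + 1) := by positivity
  have hp1 : p < 1 := (div_lt_one hpk).2 hk2
  have hpn : 1 ≤ n * p := by
    rw [hp, ← mul_div_assoc, le_div_iff₀ hpk, pow_succ, one_mul, mul_comm]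
    exact mul_le_mul_of_nonneg_left hk1 hn0.le
  have hp0 : 0 < p := by positivity
  set m := ⌊t / p⌋₊ with hm
  have hm1 : (m : ℚ) * p ≤ t := (le_div_iff₀ hp0).1 (Nat.floor_le (by positivity))
  have hm2 : t < (m + 1) * p := (div_lt_iff₀ hp0).1 (Nat.lt_floor_add_one _)
  have hmM : m ≤ M := by
    have : (m : ℚ) ≤ M := by
      have h1 : (m : ℚ) * 1 ≤ m * (n * p) := mul_le_mul_of_nonneg_left hpn (Nat.cast_nonneg m)
      have h2 : m * p * n ≤ t * n := mul_le_mul_of_nonneg_right hm1 hn0.le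
      linarith
    exact_mod_cast this
  have hmp : (m : ℚ) * p ∈ Q := by
    apply nsmul_mem_aux hn ha h0 hc
    have hle : m * k₀ ≤ k + 1 := (Nat.mul_le_mul_right k₀ hmM).trans hkM.le
    obtain ⟨d, hd⟩ := Nat.exists_eq_add_of_le hle
    have := div_pow_mem ha hx d
    convert this using 1
    rw [hp, hd, pow_add]
    field_simp
  have he : t - m * p ∈ Q := by
    apply hQminus _ (inH_sub hn htH (hH _ hmp))
    rw [abs_of_nonneg (by linarith)]
    linarith
  have := hc _ hmp _ he
  rwa [add_sub_cancel, ht, mul_div_cancel_right₀ _ (by positivity)] at this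

/-- If `Q ⊆ H = ℤ[1/n]` is a symmetric confining subset under `α⁻¹ : x ↦ x/n` which
contains `Q⁻ = {x ∈ H : |x| < 1}` and is unbounded (for every `k` it contains an
element of absolute value at least `n^k`), then `Q = H`. -/
theorem confiningInv_unbounded_eq (n : ℕ) (hn : 2 ≤ n) (Q : Set ℚ)
    (hQsymm : IsSymmSet Q) (hQconf : ConfiningInv n Q)
    (hQminus : ∀ x : ℚ, inH n x → |x| < 1 → x ∈ Q)
    (hunb : ∀ k : ℕ, ∃ x ∈ Q, (n : ℚ) ^ k ≤ |x|) :
    Q = {x : ℚ | inH n x} := by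
  apply Set.Subset.antisymm
  · exact fun x hx => hQconf.1 x hx
  · intro x hx
    rcases le_total 0 x with h | h
    · exact nonneg_mem_aux n hn Q hQsymm hQconf hQminus hunb x hx h
    · have hx' : inH n (-x) := by
        obtain ⟨a, k, rfl⟩ := hx
        exact ⟨-a, k, by push_cast; ring⟩
      have := hQsymm _ (nonneg_mem_aux n hn Q hQsymm hQconf hQminus hunb (-x) hx' (by linarith))
      rwa [neg_neg] at this
end

section
/- Fix an integer n ≥ 2 with prime factorization n = p_1^{n_1}···p_k^{n_k}, and let H = ℤ[1/n]. Let A, B ⊆ {1,…,k} be subsets with A ⊄ B and B ⊄ A, and let I_A, I_B be the corresponding full ideals of ℤ_n. Then for every K ≥ 0 there exists x ∈ S(I_A) with n^K·x ∉ S(I_B), and there exists y ∈ S(I_B) with n^K·y ∉ S(I_A). -/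
lemma exists_mem_fullIdeal (n : ℕ) (k : ℕ) (p e : Fin k → ℕ)
    (hp : ∀ i, (p i).Prime) (he : ∀ i, 1 ≤ e i) (hinj : Function.Injective p)
    (hfact : n = ∏ i, p i ^ e i) (A : Set (Fin k)) (j : Fin k) (hj : j ∉ A) :
    ∃ b ∈ FullIdeal n p e A, ∀ s : ℕ, 1 ≤ s → ¬ p j ∣ (b s).val := by
  classical
  set a := ∏ i with i ∈ A, p i ^ e i with ha
  set c := ∏ i with i ∉ A, p i ^ e i with hc
  have hac : n = a * c := by
    rw [hfact, ha, hc, Finset.prod_filter_mul_prod_filter_not]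
  have hcop : Nat.Coprime a c := by
    refine Nat.Coprime.prod_left fun i hi => Nat.Coprime.prod_right fun l hl => ?_
    refine Nat.Coprime.pow _ _ ((Nat.coprime_primes (hp i) (hp l)).2 fun h => ?_)
    have := hinj h
    subst this
    simp at hi hl
    exact hl hi
  have hcpos : 0 < c := Finset.prod_pos fun i _ => pow_pos (hp i).pos _
  have hpja : ¬ p j ∣ a := by
    intro h
    obtain ⟨i, hi, h⟩ := (hp j).prime.exists_mem_finset_dvd h
    have h2 := (hp j).dvd_of_dvd_pow h
    have h3 := hinj ((Nat.prime_dvd_prime_iff_eq (hp j) (hp i)).1 h2)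
    subst h3
    simp at hi
    exact hj hi
  have hpow : ∀ l, a ^ l ∣ (a ^ l) ^ (Nat.totient (c ^ l)) := fun l =>
    dvd_pow_self _ (Nat.totient_pos.2 (pow_pos hcpos l)).ne'
  have hpn : ∀ i, p i ^ e i ∣ n := fun i => by
    rw [hfact]; exact Finset.dvd_prod_of_mem (fun i => p i ^ e i) (Finset.mem_univ i)
  refine ⟨fun l => (((a ^ l) ^ (Nat.totient (c ^ l)) : ℕ) : ZMod (n ^ l)), ⟨?_, ?_⟩, ?_⟩
  · intro r l h
    rw [map_natCast, ZMod.natCast_eq_natCast_iff, hac, mul_pow]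
    rw [← Nat.modEq_and_modEq_iff_modEq_mul (hcop.pow r r)]
    constructor
    · exact ((Nat.modEq_zero_iff_dvd).2 ((pow_dvd_pow a h).trans (hpow l))).trans
        ((Nat.modEq_zero_iff_dvd).2 (hpow r)).symm
    · exact ((Nat.ModEq.pow_totient (hcop.pow l l)).of_dvd (pow_dvd_pow c h)).trans
        (Nat.ModEq.pow_totient (hcop.pow r r)).symm
  · intro i hi l _
    dsimp only
    rw [ZMod.val_natCast, Nat.dvd_mod_iff, pow_mul]
    · refine (pow_dvd_pow_of_dvd ?_ l).trans (hpow l)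
      exact Finset.dvd_prod_of_mem (fun i => p i ^ e i) (by simpa using hi)
    · rw [pow_mul]; exact pow_dvd_pow_of_dvd (hpn i) l
  · intro s hs h
    dsimp only at h
    have h1 : p j ∣ n ^ s :=
      ((dvd_pow_self _ (by have := he j; omega)).trans (hpn j)).trans (dvd_pow_self _ (by omega))
    rw [ZMod.val_natCast, Nat.dvd_mod_iff h1] at h
    exact hpja ((hp j).dvd_of_dvd_pow ((hp j).dvd_of_dvd_pow h))

lemma SIdeal_full_aux (n : ℕ) (hn : 2 ≤ n) (k : ℕ) (p e : Fin k → ℕ)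
    (hp : ∀ i, (p i).Prime) (he : ∀ i, 1 ≤ e i) (hinj : Function.Injective p)
    (hfact : n = ∏ i, p i ^ e i) (A B : Set (Fin k)) (hBA : ¬B ⊆ A) (K : ℕ) :
    ∃ x ∈ SIdeal n (FullIdeal n p e A), (n : ℚ) ^ K * x ∉ SIdeal n (FullIdeal n p e B) := by
  classical
  obtain ⟨j, hjB, hjA⟩ := Set.not_subset.1 hBA
  obtain ⟨b, hb, hbj⟩ := exists_mem_fullIdeal n k p e hp he hinj hfact A j hjA
  have hn0 : (n : ℚ) ≠ 0 := by positivity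
  have hnpos : (0 : ℚ) < n := by positivity
  haveI : NeZero n := ⟨by omega⟩
  specialize hbj (K + 1) (by omega)
  have hlt := ZMod.val_lt (b (K + 1))
  set m := (b (K + 1)).val with hm
  refine ⟨(m : ℚ) / (n : ℚ) ^ (K + 1), ⟨⟨m, K + 1, by simp⟩, K + 1, ⟨m, ?_⟩, b, hb, ?_⟩, ?_⟩
  · field_simp; simp
  · rw [abs_of_nonneg (by positivity), Int.fract_eq_self.2 ⟨by positivity, ?_⟩]
    rw [div_lt_one (by positivity)]
    exact_mod_cast hlt
  · rintro ⟨-, t, -, c, hc, h⟩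
    have hx : (n : ℚ) ^ K * ((m : ℚ) / (n : ℚ) ^ (K + 1)) = m / n := by
      field_simp
      ring
    rw [hx, abs_of_nonneg (by positivity)] at h
    have hd : p j ^ (e j * t) ∣ (c t).val := by
      rcases Nat.eq_zero_or_pos t with rfl | ht
      · simp
      · exact hc.2 j hjB t ht
    have h2 : ((n : ℤ) ^ t * m) = n * (c t).val + (n : ℤ) ^ (t + 1) * ⌊(m / n : ℚ)⌋ := by
      have h3 := Int.floor_add_fract (m / n : ℚ)
      rw [h] at h3
      have : ((n : ℚ) ^ t * m) = n * (c t).val + (n : ℚ) ^ (t + 1) * ⌊(m / n : ℚ)⌋ := by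
        generalize (⌊(m / n : ℚ)⌋ : ℤ) = f at *
        field_simp at h3
        rw [pow_succ]
        linear_combination -h3
      exact_mod_cast this
    obtain ⟨q, hq⟩ : ∃ q, n = p j ^ e j * q := by
      rw [hfact]; exact Finset.dvd_prod_of_mem (fun i => p i ^ e i) (Finset.mem_univ j)
    have hqj : ¬ p j ∣ q := by
      have hq' : q = ∏ i ∈ Finset.univ.erase j, p i ^ e i := by
        have := Finset.mul_prod_erase Finset.univ (fun i => p i ^ e i) (Finset.mem_univ j)
        rw [← hfact, hq] at this
        exact (Nat.eq_of_mul_eq_mul_left (pow_pos (hp j).pos _) this).symm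
      rw [hq']
      intro h
      obtain ⟨i, hi, h⟩ := (hp j).prime.exists_mem_finset_dvd h
      have h3 := hinj ((Nat.prime_dvd_prime_iff_eq (hp j) (hp i)).1 ((hp j).dvd_of_dvd_pow h))
      exact (Finset.ne_of_mem_erase hi) h3.symm
    have hdn : p j ^ e j ∣ n := ⟨q, hq⟩
    have h4 : ((p j ^ (e j * (t + 1)) : ℕ) : ℤ) ∣ (n : ℤ) ^ t * m := by
      rw [h2]
      refine dvd_add ?_ (Dvd.dvd.mul_right ?_ _)
      · rw [mul_add, pow_add, mul_one, mul_comm]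
        exact_mod_cast mul_dvd_mul hdn hd
      · rw [pow_mul]
        exact_mod_cast pow_dvd_pow_of_dvd hdn (t + 1)
    have h5 : p j ^ (e j * (t + 1)) ∣ n ^ t * m := by exact_mod_cast h4
    rw [hq, mul_pow, ← pow_mul, mul_add, pow_add, mul_one, mul_assoc] at h5
    have h6 := Nat.dvd_of_mul_dvd_mul_left (pow_pos (hp j).pos _) h5
    have h7 : p j ∣ q ^ t * m := (dvd_pow_self _ (by have := he j; omega)).trans h6
    rcases (hp j).dvd_mul.1 h7 with h8 | h8
    · exact hqj ((hp j).dvd_of_dvd_pow h8)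
    · exact hbj h8

theorem SIdeal_full_incomparable (n : ℕ) (hn : 2 ≤ n) (k : ℕ) (p e : Fin k → ℕ)
    (hp : ∀ i, (p i).Prime) (he : ∀ i, 1 ≤ e i) (hinj : Function.Injective p)
    (hfact : n = ∏ i, p i ^ e i) (A B : Set (Fin k)) (hAB : ¬A ⊆ B) (hBA : ¬B ⊆ A) :
    ∀ K : ℕ,
      (∃ x ∈ SIdeal n (FullIdeal n p e A), (n : ℚ) ^ K * x ∉ SIdeal n (FullIdeal n p e B)) ∧
      (∃ y ∈ SIdeal n (FullIdeal n p e B), (n : ℚ) ^ K * y ∉ SIdeal n (FullIdeal n p e A)) :=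
  fun K => ⟨SIdeal_full_aux n hn k p e hp he hinj hfact A B hBA K,
    SIdeal_full_aux n hn k p e hp he hinj hfact B A hAB K⟩
end

section
/- Fix an integer n ≥ 2 with prime factorization n = p_1^{n_1}···p_k^{n_k}, and let H = ℤ[1/n]. First, for any ideals 𝔞 ⊆ 𝔟 of ℤ_n one has S(𝔞) ⊆ S(𝔟). Moreover, if A, B ⊆ {1,…,k} satisfy B ⊊ A (so that the full ideals satisfy I_A ⊊ I_B), then S(I_A) ⊆ S(I_B) and for every K ≥ 0 there exists x ∈ S(I_B) with n^K·x ∉ S(I_A). -/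
/-- An idempotent of `ℤ_n` vanishing modulo `q` and equal to one modulo `m`. -/
theorem exists_idem_aux (n q m : ℕ) (hnq : n = q * m) (hn : 2 ≤ n) (hc : Nat.Coprime q m) :
    ∃ x : ∀ l : ℕ, ZMod (n ^ l), ZnMem n x ∧ (∀ l, q ^ l ∣ (x l).val) ∧
      ∀ l, (x l).val ≡ 1 [MOD m ^ l] := by
  have key : ∀ l : ℕ, ∃ a : ℕ, a ≡ 0 [MOD q ^ l] ∧ a ≡ 1 [MOD m ^ l] := fun l =>
    ⟨_, (Nat.chineseRemainder (hc.pow l l) 0 1).2⟩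
  choose a ha0 ha1 using key
  have hv : ∀ l, ((a l : ℕ) : ZMod (n ^ l)).val ≡ a l [MOD n ^ l] := fun l => by
    rw [ZMod.val_natCast]; exact Nat.mod_modEq _ _
  refine ⟨fun l => (a l : ZMod (n ^ l)), ?_, ?_, ?_⟩
  · intro k l h
    rw [map_natCast, ZMod.natCast_eq_natCast_iff, hnq, mul_pow,
      ← Nat.modEq_and_modEq_iff_modEq_mul (hc.pow k k)]
    exact ⟨((ha0 l).of_dvd (pow_dvd_pow q h)).trans (ha0 k).symm,
      ((ha1 l).of_dvd (pow_dvd_pow m h)).trans (ha1 k).symm⟩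
  · intro l
    have : q ^ l ∣ n ^ l := pow_dvd_pow_of_dvd ⟨m, hnq⟩ l
    exact (Nat.modEq_zero_iff_dvd).1 (((hv l).of_dvd this).trans (ha0 l))
  · intro l
    have : m ^ l ∣ n ^ l := pow_dvd_pow_of_dvd ⟨q, by rw [hnq, mul_comm]⟩ l
    exact ((hv l).of_dvd this).trans (ha1 l)

/-- Monotonicity and strict order-reversal for the map `𝔞 ↦ S(𝔞)`.
For ideals `𝔞 ⊆ 𝔟` of `ℤ_n` one has `S(𝔞) ⊆ S(𝔟)`; moreover if `B ⊊ A` (so that the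
full ideals satisfy `I_A ⊊ I_B`), then `S(I_A) ⊆ S(I_B)`, and for every `K ≥ 0` there
is `x ∈ S(I_B)` with `n^K·x ∉ S(I_A)`. -/
theorem SIdeal_orderReversing (n : ℕ) (hn : 2 ≤ n) (k : ℕ) (p e : Fin k → ℕ)
    (hp : ∀ i, (p i).Prime) (he : ∀ i, 1 ≤ e i) (hinj : Function.Injective p)
    (hfact : n = ∏ i, p i ^ e i) (A B : Set (Fin k)) (hBA : B ⊂ A) :
    (∀ I J : Set (∀ l : ℕ, ZMod (n ^ l)), IsZnIdeal n I → IsZnIdeal n J → I ⊆ J →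
      SIdeal n I ⊆ SIdeal n J) ∧
    FullIdeal n p e A ⊂ FullIdeal n p e B ∧
    SIdeal n (FullIdeal n p e A) ⊆ SIdeal n (FullIdeal n p e B) ∧
    (∀ K : ℕ, ∃ x ∈ SIdeal n (FullIdeal n p e B),
      (n : ℚ) ^ K * x ∉ SIdeal n (FullIdeal n p e A)) := by
  have mono : ∀ I J : Set (∀ l : ℕ, ZMod (n ^ l)), I ⊆ J → SIdeal n I ⊆ SIdeal n J := by
    rintro I J hIJ x ⟨hx, s, hs, b, hb, h⟩
    exact ⟨hx, s, hs, b, hIJ hb, h⟩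
  obtain ⟨i0, hiA, hiB⟩ := Set.exists_of_ssubset hBA
  have hsub : FullIdeal n p e A ⊆ FullIdeal n p e B := fun x hx =>
    ⟨hx.1, fun i hi => hx.2 i (hBA.1 hi)⟩
  obtain ⟨q, hq⟩ : ∃ q, q = ∏ i ∈ Finset.univ.erase i0, p i ^ e i := ⟨_, rfl⟩
  have hnq : n = q * p i0 ^ e i0 := by
    rw [hfact, hq, Finset.prod_erase_mul _ _ (Finset.mem_univ i0)]
  have hc0 : Nat.Coprime q (p i0) := by
    rw [hq]
    refine Nat.Coprime.prod_left fun i hi => ?_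
    refine Nat.Coprime.pow_left _ ((Nat.coprime_primes (hp i) (hp i0)).2 fun h => ?_)
    exact (Finset.mem_erase.1 hi).1 (hinj h)
  obtain ⟨x, hx, hx0, hx1⟩ := exists_idem_aux n q (p i0 ^ e i0) hnq hn (hc0.pow_right _)
  have hxB : x ∈ FullIdeal n p e B := by
    refine ⟨hx, fun i hi l _ => ?_⟩
    have hne : i ≠ i0 := fun h => hiB (h ▸ hi)
    rw [pow_mul]
    refine (pow_dvd_pow_of_dvd ?_ l).trans (hx0 l)
    rw [hq]
    exact Finset.dvd_prod_of_mem _ (Finset.mem_erase.2 ⟨hne, Finset.mem_univ i⟩)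
  have hnd : ∀ l, 1 ≤ l → ¬ p i0 ∣ (x l).val := by
    intro l hl hd
    have h1 : p i0 ∣ (p i0 ^ e i0) ^ l := by
      rw [← pow_mul]
      exact dvd_pow_self _ (Nat.mul_ne_zero (by have := he i0; omega) (by omega))
    have h2 := ((hx1 l).of_dvd h1).symm.trans ((Nat.modEq_zero_iff_dvd).2 hd)
    exact (hp i0).one_lt.ne' (Nat.dvd_one.1 ((Nat.modEq_zero_iff_dvd).1 h2))
  have hnQ : (n : ℚ) ≠ 0 := by positivity
  refine ⟨fun I J _ _ h => mono I J h, ⟨hsub, fun h => ?_⟩, mono _ _ hsub, fun K => ?_⟩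
  · refine hnd 1 le_rfl (dvd_trans ?_ ((h hxB).2 i0 hiA 1 le_rfl))
    exact dvd_pow_self _ (by have := he i0; omega)
  · refine ⟨((x (K + 1)).val : ℚ) / (n : ℚ) ^ (K + 1),
      ⟨⟨(x (K + 1)).val, K + 1, by push_cast; rfl⟩, K + 1, ⟨(x (K + 1)).val, ?_⟩, x, hxB, ?_⟩, ?_⟩
    · push_cast; field_simp
    · have : NeZero (n ^ (K + 1)) := ⟨by positivity⟩
      rw [abs_of_nonneg (by positivity), Int.fract_eq_self]
      refine ⟨by positivity, ?_⟩
      rw [div_lt_one (by positivity)]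
      exact_mod_cast ZMod.val_lt (x (K + 1))
    · rintro ⟨-, t, -, b, hb, hbt⟩
      have hy : (n : ℚ) ^ K * (((x (K + 1)).val : ℚ) / (n : ℚ) ^ (K + 1))
          = ((x (K + 1)).val : ℚ) / n := by
        field_simp
        ring
      have hd : (p i0 ^ e i0) ^ t ∣ (b t).val := by
        rcases Nat.eq_zero_or_pos t with h | h
        · subst h; simp
        · rw [← pow_mul]; exact hb.2 i0 hiA t h
      obtain ⟨c, hcc⟩ := hd
      rw [hy, abs_of_nonneg (by positivity), Int.fract, hcc] at hbt
      generalize ⌊((x (K + 1)).val : ℚ) / n⌋ = z at hbt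
      have hnd' := hnd (K + 1) (by omega)
      generalize (x (K + 1)).val = v at hbt hnd'
      have hnQ' : (n : ℚ) = q * (p i0 : ℚ) ^ e i0 := by exact_mod_cast hnq
      have hqQ : (q : ℚ) ≠ 0 := by rintro h; simp [hnQ', h] at hnQ
      have hpQ : (p i0 : ℚ) ^ e i0 ≠ 0 := by intro h; simp [hnQ', h] at hnQ
      have h1 : (((p i0 ^ e i0) ^ t * c : ℕ) : ℚ) / (n : ℚ) ^ t = c / (q : ℚ) ^ t := by
        rw [hnQ', mul_pow]; push_cast
        rw [mul_comm ((q : ℚ) ^ t), mul_div_mul_left _ _ (pow_ne_zero _ hpQ)]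
      rw [h1] at hbt
      have h2 : (q : ℚ) ^ t * v = n * (c + z * (q : ℚ) ^ t) := by
        field_simp at hbt
        linarith
      have h3 : (q : ℤ) ^ t * v = n * (c + z * (q : ℤ) ^ t) := by exact_mod_cast h2
      have hpn : p i0 ∣ n := by
        rw [hnq]; exact Dvd.dvd.mul_left (dvd_pow_self _ (by have := he i0; omega)) _
      have h4 : (p i0 : ℤ) ∣ ((q ^ t * v : ℕ) : ℤ) := by
        push_cast; rw [h3]
        exact Dvd.dvd.mul_right (Int.natCast_dvd_natCast.2 hpn) _
      exact hnd' ((Nat.Coprime.pow_right t hc0.symm).dvd_of_dvd_mul_left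
        (Int.natCast_dvd_natCast.1 h4))
end

section
/- Let H = ℤ[x, x⁻¹] be the additive group of Laurent polynomials over ℤ, let α be the automorphism p(x) ↦ x·p(x), and let S = {±x^m : m ≥ 0}. For an integer i ≥ 1 define Q^i_0 = S, Q^i_{r+1} = Q^i_r ∪ x^i·(Q^i_r + Q^i_r) for r ≥ 0, and Q^i = ⋃_{r≥0} Q^i_r. Then for all integers 1 ≤ i < j and for every L ≥ 0, there exists r ≥ 0 such that for all integers k ≥ 0 and m ≥ 0 with 2k + m ≤ L, the Laurent polynomial 2^r·x^{ri+k} cannot be written as a sum of m elements of Q^j. -/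
open LaurentPolynomial

/-- `S = {±x^m : m ≥ 0}` inside the additive group of Laurent polynomials `ℤ[x,x⁻¹]`. -/
def SLaurent : Set (LaurentPolynomial ℤ) :=
  {p | ∃ m : ℕ, p = T (m : ℤ) ∨ p = -T (m : ℤ)}

/-- The increasing sequence of subsets `Q^i_0 = S`,
`Q^i_{r+1} = Q^i_r ∪ x^i·(Q^i_r + Q^i_r)` of `ℤ[x,x⁻¹]`. -/
def QLSeq (i : ℕ) : ℕ → Set (LaurentPolynomial ℤ)
  | 0 => SLaurent
  | r + 1 => QLSeq i r ∪
      {p | ∃ q ∈ QLSeq i r, ∃ q' ∈ QLSeq i r, p = T (i : ℤ) * (q + q')}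

/-- `Q^i = ⋃_{r ≥ 0} Q^i_r`. -/
def QLSet (i : ℕ) : Set (LaurentPolynomial ℤ) := ⋃ r : ℕ, QLSeq i r

theorem coeff_T_mul_aux (a n : ℤ) (p : LaurentPolynomial ℤ) :
    (T a * p).coeff n = p.coeff (n - a) := by
  rw [show (T a : LaurentPolynomial ℤ) = AddMonoidAlgebra.single a 1 from rfl,
    AddMonoidAlgebra.coeff_single_mul_apply, one_mul]
  congr 1
  ring

theorem QLSeq_bound (j : ℕ) (hj : 0 < j) (r : ℕ) : ∀ p ∈ QLSeq j r,
    (∀ n : ℤ, n < 0 → p.coeff n = 0) ∧ ∀ n : ℕ, |p.coeff (n : ℤ)| ≤ 2 ^ (n / j) := by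
  induction r with
  | zero =>
    rintro p ⟨m, rfl | rfl⟩
    · refine ⟨fun n hn => ?_, fun n => ?_⟩
      · rw [T_apply, if_neg (by omega)]
      · have : (1 : ℤ) ≤ 2 ^ (n / j) := one_le_pow₀ (by norm_num)
        rw [T_apply]
        split_ifs
        · simpa using this
        · simp
    · refine ⟨fun n hn => ?_, fun n => ?_⟩
      · rw [AddMonoidAlgebra.coeff_neg, Finsupp.neg_apply, T_apply, if_neg (by omega), neg_zero]
      · have : (1 : ℤ) ≤ 2 ^ (n / j) := one_le_pow₀ (by norm_num)
        rw [AddMonoidAlgebra.coeff_neg, Finsupp.neg_apply, T_apply]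
        split_ifs
        · simpa using this
        · simp
  | succ r ih =>
    rintro p (hp | ⟨q, hq, q', hq', rfl⟩)
    · exact ih p hp
    · obtain ⟨h1, h2⟩ := ih q hq
      obtain ⟨h1', h2'⟩ := ih q' hq'
      refine ⟨fun n hn => ?_, fun n => ?_⟩
      · rw [coeff_T_mul_aux, AddMonoidAlgebra.coeff_add, Finsupp.add_apply,
          h1 _ (by omega), h1' _ (by omega), add_zero]
      · rw [coeff_T_mul_aux, AddMonoidAlgebra.coeff_add, Finsupp.add_apply]
        by_cases hnj : n < j
        · rw [h1 _ (by omega), h1' _ (by omega)]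
          simp
        · push Not at hnj
          obtain ⟨d, rfl⟩ := Nat.exists_eq_add_of_le hnj
          have e : ((j + d : ℕ) : ℤ) - (j : ℤ) = (d : ℤ) := by push_cast; ring
          rw [e, Nat.add_div_left _ hj, pow_succ]
          have := abs_add_le (q.coeff (d : ℤ)) (q'.coeff (d : ℤ))
          have := h2 d
          have := h2' d
          linarith

/-- Let `H = ℤ[x,x⁻¹]` with `α : p(x) ↦ x·p(x)` and `S = {±x^m : m ≥ 0}`, and define
`Q^i` as above. Then for all `1 ≤ i < j` and every `L ≥ 0` there is `r ≥ 0` such that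
for all `k, m ≥ 0` with `2k + m ≤ L`, the Laurent polynomial `2^r·x^{ri+k}` is not a
sum of `m` elements of `Q^j`. -/
theorem QLSet_distinct (i j : ℕ) (hi : 1 ≤ i) (hij : i < j) (L : ℕ) :
    ∃ r : ℕ, ∀ k m : ℕ, 2 * k + m ≤ L →
      ¬∃ f : ℕ → LaurentPolynomial ℤ, (∀ a < m, f a ∈ QLSet j) ∧
        ∑ a ∈ Finset.range m, f a = (2 ^ r : ℤ) • T ((r * i + k : ℕ) : ℤ) := by
  refine ⟨L + j * L, ?_⟩
  rintro k m hkm ⟨f, hf, hsum⟩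
  set r := L + j * L with hr
  have h := congrArg (fun p : LaurentPolynomial ℤ => p.coeff ((r * i + k : ℕ) : ℤ)) hsum
  simp only [AddMonoidAlgebra.coeff_sum, AddMonoidAlgebra.coeff_smul, Finsupp.smul_apply,
    Finsupp.finsetSum_apply, T_apply, if_true, smul_eq_mul, mul_one] at h
  have hb : |∑ a ∈ Finset.range m, (f a).coeff ((r * i + k : ℕ) : ℤ)|
      ≤ ∑ a ∈ Finset.range m, (2 : ℤ) ^ ((r * i + k) / j) := by
    refine (Finset.abs_sum_le_sum_abs _ _).trans (Finset.sum_le_sum fun a ha => ?_)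
    obtain ⟨s, hs⟩ := Set.mem_iUnion.1 (hf a (Finset.mem_range.1 ha))
    exact (QLSeq_bound j (by omega) s _ hs).2 _
  rw [h, abs_of_nonneg (by positivity), Finset.sum_const, Finset.card_range, nsmul_eq_mul] at hb
  set e := (r * i + k) / j with he
  have hm : m < 2 ^ L := lt_of_le_of_lt (by omega) (Nat.lt_two_pow_self (n := L))
  have hb' : 2 ^ r ≤ m * 2 ^ e := by exact_mod_cast hb
  have hlt : 2 ^ r < 2 ^ (L + e) := by
    rw [pow_add 2 L e]
    exact lt_of_le_of_lt hb' (Nat.mul_lt_mul_of_pos_right hm (by positivity))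
  have hre : r < L + e := (Nat.pow_lt_pow_iff_right (by norm_num)).1 hlt
  have hej : e * j ≤ r * i + k := Nat.div_mul_le_self _ _
  have hkL : k ≤ L := by omega
  nlinarith [Nat.mul_le_mul_left r (show i + 1 ≤ j from hij),
    Nat.mul_lt_mul_of_pos_right hre (show 0 < j by omega)]
end
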